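/- arXiv:1207.0640 — 2 statements merged into one kernel-verified Lean document; each statement's English description precedes it below -/
import Mathlib

section
/- Let Γ be a planar network of rank n (a finite graph embedded in a vertical strip with straight-line non-vertical edges, n sources on the left boundary and n sinks on the right boundary at heights 1,...,n), and for 0 ≤ k ≤ n let Γ^{(k)} be the subnetwork obtained by deleting all sources and sinks at heights above k. For any real weighting ε, the numbers t_i^k = l_iΓ^{(k)}(ε) (the maximal total weight of i pairwise disjoint source-to-sink paths in Γ^{(k)}; t_0^k = 0) satisfy, whenever they are all finite, the inequalities t_i^k + t_{i-1}^{k-1} ≥ t_{i-1}^k + t_i^{k-1} and t_i^k + t_i^{k-1} ≥ t_{i+1}^k + t_{i-1}^{k-1} for all 0 < i ≤ k−1 < n. -/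
open scoped BigOperators

/-- A planar network: a finite graph embedded in the vertical strip
`{a ≤ x ≤ b}` with straight-line, non-vertical edges, oriented from left to
right; edge segments meet only at common endpoints, and no vertex lies in the
interior of an edge. -/
structure PlanarNetwork where
  a : ℝ
  b : ℝ
  hab : a < b
  V : Finset (ℝ × ℝ)
  E : Finset ((ℝ × ℝ) × (ℝ × ℝ))
  strip : ∀ p ∈ V, a ≤ p.1 ∧ p.1 ≤ b
  ends : ∀ e ∈ E, e.1 ∈ V ∧ e.2 ∈ V ∧ e.1.1 < e.2.1
  embed : ∀ e ∈ E, ∀ f ∈ E, e ≠ f →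
    ∀ x ∈ openSegment ℝ e.1 e.2, x ∉ segment ℝ f.1 f.2
  embedV : ∀ e ∈ E, ∀ p ∈ V, p ∉ openSegment ℝ e.1 e.2

/-- The network has `n` sources on the left boundary and `n` sinks on the
right boundary, at heights `1, …, n`. -/
def PlanarNetwork.HasRank (Γ : PlanarNetwork) (n : ℕ) : Prop :=
  (∀ p ∈ Γ.V, p.1 = Γ.a → ∃ j : ℕ, 1 ≤ j ∧ j ≤ n ∧ p.2 = (j : ℝ)) ∧
  (∀ p ∈ Γ.V, p.1 = Γ.b → ∃ j : ℕ, 1 ≤ j ∧ j ≤ n ∧ p.2 = (j : ℝ)) ∧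
  (∀ j : ℕ, 1 ≤ j → j ≤ n →
    (Γ.a, (j : ℝ)) ∈ Γ.V ∧ (Γ.b, (j : ℝ)) ∈ Γ.V)

/-- The weight of a path (recorded as the list of its vertices): the sum of
the weights of its edges. -/
def pathWeight {α : Type*} [AddCommMonoid α]
    (ε : (ℝ × ℝ) × (ℝ × ℝ) → α) (L : List (ℝ × ℝ)) : α :=
  ((L.zip L.tail).map ε).sum

/-- `L` is a directed path in `Γ` from `p` to `q`. -/
def IsPathBetween (Γ : PlanarNetwork) (p q : ℝ × ℝ) (L : List (ℝ × ℝ)) : Prop :=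
  L ≠ [] ∧ List.Chain' (fun u v => (u, v) ∈ Γ.E) L ∧
    L.head? = some p ∧ L.getLast? = some q

/-- `L` is a directed path in `Γ` from a source to a sink. -/
def IsThroughPath (Γ : PlanarNetwork) (L : List (ℝ × ℝ)) : Prop :=
  ∃ p q, IsPathBetween Γ p q L ∧ p.1 = Γ.a ∧ q.1 = Γ.b

/-- `L` is a source-to-sink path of the subnetwork `Γ^{(k)}` (both endpoints
at height at most `k`). -/
def IsBoundedPath (Γ : PlanarNetwork) (k : ℕ) (L : List (ℝ × ℝ)) : Prop :=
  ∃ p q, IsPathBetween Γ p q L ∧ p.1 = Γ.a ∧ q.1 = Γ.b ∧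
    p.2 ≤ (k : ℝ) ∧ q.2 ≤ (k : ℝ)

/-- Pairwise vertex-disjointness of a family of paths. -/
def PairwiseVertexDisjoint {m : ℕ} (F : Fin m → List (ℝ × ℝ)) : Prop :=
  ∀ j j', j ≠ j' → ∀ v ∈ F j, v ∉ F j'

/-- The set of total weights of `i`-multipaths of `Γ^{(k)}`: unions of `i`
pairwise vertex-disjoint source-to-sink paths with endpoints at height ≤ `k`. -/
def boundedWeights (Γ : PlanarNetwork) (ε : (ℝ × ℝ) × (ℝ × ℝ) → ℝ)
    (i k : ℕ) : Set ℝ :=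
  { x | ∃ F : Fin i → List (ℝ × ℝ),
      (∀ j, IsBoundedPath Γ k (F j)) ∧ PairwiseVertexDisjoint F ∧
      x = ∑ j, pathWeight ε (F j) }

/-!
Disjoint source-to-sink paths have everywhere distinct heights, so by continuity a multipath is
linearly ordered from bottom to top. Any two paths may be replaced by their lower and upper
envelopes, which use the same edges with the same multiplicities: planarity forces the paths to
cross at common vertices only, and there the tails can be exchanged. Replacing corresponding
members of two multipaths, after a shift of the numbering by one, by their envelopes recombines two
multipaths into two others of the same total weight. Hence every sum of weights on the smaller side
of a rhombus inequality also occurs on the larger side.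
-/

section

open Set
open scoped Pointwise

/-! ### Polygonal lines -/

lemma exists_eq_or_exists_infix_lt {α β : Type*} [LinearOrder β] (f : α → β) {L : List α}
    {p q : α} {x : β} (hp : p ∈ L.head?) (hq : q ∈ L.getLast?) (hpx : f p ≤ x) (hxq : x ≤ f q) :
    (∃ v ∈ L, f v = x) ∨ ∃ u v, [u, v] <:+: L ∧ f u < x ∧ x < f v := by
  induction L generalizing p with
  | nil => simp at hp
  | cons u L ih =>
    obtain rfl : u = p := by simpa using hp
    rcases hpx.eq_or_lt with hux | hux
    · exact Or.inl ⟨u, List.mem_cons_self, hux⟩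
    cases L with
    | nil =>
      obtain rfl : u = q := by simpa using hq
      exact absurd hux hxq.not_gt
    | cons v L =>
      rcases lt_or_ge x (f v) with hxv | hvx
      · exact Or.inr ⟨u, v, ⟨[], L, rfl⟩, hux, hxv⟩
      · rcases ih (p := v) rfl (by simpa using hq) hvx with ⟨w, hw, hwx⟩ | ⟨w, z, hwz, hx⟩
        · exact Or.inl ⟨w, List.mem_cons_of_mem u hw, hwx⟩
        · exact Or.inr ⟨w, z, List.infix_cons hwz, hx⟩

/-- The height at abscissa `x` of the line through `u` and `v`. -/
noncomputable def lineHeight (u v : ℝ × ℝ) (x : ℝ) : ℝ :=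
  AffineMap.lineMap u.2 v.2 ((x - u.1) / (v.1 - u.1))

lemma lineHeight_left (u v : ℝ × ℝ) : lineHeight u v u.1 = u.2 := by
  simp [lineHeight]

lemma lineHeight_right {u v : ℝ × ℝ} (h : u.1 < v.1) : lineHeight u v v.1 = v.2 := by
  simp [lineHeight, (sub_pos.2 h).ne']

lemma continuous_lineHeight (u v : ℝ × ℝ) : Continuous (lineHeight u v) :=
  AffineMap.lineMap_continuous.comp (by fun_prop)

lemma lineHeight_mem_openSegment {u v : ℝ × ℝ} {x : ℝ} (hux : u.1 < x) (hxv : x < v.1) :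
    (x, lineHeight u v x) ∈ openSegment ℝ u v := by
  have huv : 0 < v.1 - u.1 := sub_pos.2 (hux.trans hxv)
  rw [openSegment_eq_image_lineMap]
  refine ⟨(x - u.1) / (v.1 - u.1), ⟨div_pos (sub_pos.2 hux) huv, ?_⟩, Prod.ext ?_ ?_⟩
  · rw [div_lt_one huv]
    exact sub_lt_sub_right hxv _
  · simp [AffineMap.lineMap_apply, huv.ne']
  · simp [AffineMap.lineMap_apply, lineHeight]

/-- The height at abscissa `x` of the polygonal line with vertices `L`, extended beyond its two
ends; meaningful when the abscissae of `L` increase. -/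
noncomputable def pathHeight : List (ℝ × ℝ) → ℝ → ℝ
  | [], _ => 0
  | [u], _ => u.2
  | u :: v :: L, x => if x ≤ v.1 then lineHeight u v x else pathHeight (v :: L) x

/-- The polygonal line with vertices `L` runs strictly from left to right, hence is a graph over the
horizontal axis. -/
abbrev IsRightward (L : List (ℝ × ℝ)) : Prop :=
  L.Pairwise fun u v => u.1 < v.1

lemma pathHeight_cons_fst {u : ℝ × ℝ} {L : List (ℝ × ℝ)} (h : IsRightward (u :: L)) :
    pathHeight (u :: L) u.1 = u.2 := by
  cases L with
  | nil => rfl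
  | cons v L =>
    have huv : u.1 < v.1 := List.rel_of_pairwise_cons h List.mem_cons_self
    rw [pathHeight, if_pos huv.le, lineHeight_left]

lemma pathHeight_cons_cons_of_fst_le {u v : ℝ × ℝ} {L : List (ℝ × ℝ)} {x : ℝ}
    (h : IsRightward (u :: v :: L)) (hx : v.1 ≤ x) :
    pathHeight (u :: v :: L) x = pathHeight (v :: L) x := by
  rcases hx.eq_or_lt with rfl | hx
  · have huv : u.1 < v.1 := List.rel_of_pairwise_cons h List.mem_cons_self
    rw [pathHeight, if_pos le_rfl, lineHeight_right huv, pathHeight_cons_fst h.of_cons]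
  · rw [pathHeight, if_neg hx.not_ge]

lemma continuous_pathHeight {L : List (ℝ × ℝ)} (h : IsRightward L) :
    Continuous (pathHeight L) := by
  induction L with
  | nil => exact continuous_const
  | cons u L ih =>
    cases L with
    | nil => exact continuous_const
    | cons v L =>
      refine Continuous.if_le (continuous_lineHeight u v) (ih h.of_cons) continuous_id
        continuous_const ?_
      rintro x rfl
      exact (lineHeight_right (List.rel_of_pairwise_cons h List.mem_cons_self)).trans
        (pathHeight_cons_fst h.of_cons).symm

lemma pathHeight_append_of_fst_le {l₁ l₂ : List (ℝ × ℝ)} {v : ℝ × ℝ} {x : ℝ}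
    (h : IsRightward (l₁ ++ v :: l₂)) (hx : v.1 ≤ x) :
    pathHeight (l₁ ++ v :: l₂) x = pathHeight (v :: l₂) x := by
  induction l₁ with
  | nil => rfl
  | cons u l₁ ih =>
    rw [← ih h.of_cons]
    cases l₁ with
    | nil => exact pathHeight_cons_cons_of_fst_le h hx
    | cons w l₁ =>
      have hwv : w.1 < v.1 := List.rel_of_pairwise_cons h.of_cons (by simp)
      exact pathHeight_cons_cons_of_fst_le h (hwv.le.trans hx)

lemma pathHeight_of_mem {L : List (ℝ × ℝ)} {v : ℝ × ℝ} (h : IsRightward L) (hv : v ∈ L) :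
    pathHeight L v.1 = v.2 := by
  obtain ⟨l₁, l₂, rfl⟩ := List.append_of_mem hv
  rw [pathHeight_append_of_fst_le h le_rfl]
  exact pathHeight_cons_fst (List.pairwise_append.1 h).2.1

lemma pathHeight_eqOn_lineHeight {L : List (ℝ × ℝ)} {u v : ℝ × ℝ} (h : IsRightward L)
    (huv : [u, v] <:+: L) : EqOn (pathHeight L) (lineHeight u v) (Icc u.1 v.1) := by
  obtain ⟨l₁, l₂, rfl⟩ := huv
  simp only [List.append_assoc, List.cons_append, List.nil_append] at h ⊢
  intro x hx
  rw [pathHeight_append_of_fst_le h hx.1]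
  exact if_pos hx.2

lemma pathHeight_eqOn_of_infix {L L' : List (ℝ × ℝ)} {p q : ℝ × ℝ} (h : IsRightward L)
    (hL : L' <:+: L) (hp : p ∈ L'.head?) (hq : q ∈ L'.getLast?) :
    EqOn (pathHeight L) (pathHeight L') (Icc p.1 q.1) := by
  have h' : IsRightward L' := h.sublist hL.sublist
  intro x hx
  rcases exists_eq_or_exists_infix_lt Prod.fst hp hq hx.1 hx.2 with
    ⟨v, hv, rfl⟩ | ⟨u, v, huv, hux, hxv⟩
  · rw [pathHeight_of_mem h' hv, pathHeight_of_mem h (hL.subset hv)]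
  · have hx : x ∈ Icc u.1 v.1 := ⟨hux.le, hxv.le⟩
    rw [pathHeight_eqOn_lineHeight h' huv hx, pathHeight_eqOn_lineHeight h (huv.trans hL) hx]

lemma pathWeight_append {α : Type*} [AddCommMonoid α] (ε : (ℝ × ℝ) × (ℝ × ℝ) → α)
    (l₁ l₂ : List (ℝ × ℝ)) (v : ℝ × ℝ) :
    pathWeight ε (l₁ ++ v :: l₂) = pathWeight ε (l₁ ++ [v]) + pathWeight ε (v :: l₂) := by
  induction l₁ with
  | nil => simp [pathWeight]
  | cons u l₁ ih =>
    cases l₁ with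
    | nil => simp [pathWeight]
    | cons w l₁ =>
      simp only [pathWeight, List.cons_append, List.tail_cons, List.zip_cons_cons,
        List.map_cons, List.sum_cons] at ih ⊢
      rw [ih, add_assoc]

/-! ### Functions without coincidences -/

section Preconnected

variable {X α : Type*} [TopologicalSpace X] [TopologicalSpace α] [LinearOrder α]
  [OrderClosedTopology α] {s : Set X} {f g : X → α}

lemma forall_lt_of_forall_ne (hs : IsPreconnected s) (hf : ContinuousOn f s)
    (hg : ContinuousOn g s) (hne : ∀ x ∈ s, f x ≠ g x) {a : X} (ha : a ∈ s) (hlt : f a < g a) :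
    ∀ x ∈ s, f x < g x := by
  by_contra! hcon
  obtain ⟨b, hb, hgf⟩ := hcon
  obtain ⟨c, hc, hfg⟩ := hs.intermediate_value₂ ha hb hf hg hlt.le hgf
  exact hne c hc hfg

lemma forall_mem_closure_le_or_ge (hs : IsPreconnected s) (hf : Continuous f)
    (hg : Continuous g) (hne : ∀ x ∈ s, f x ≠ g x) :
    (∀ x ∈ closure s, f x ≤ g x) ∨ ∀ x ∈ closure s, g x ≤ f x := by
  by_cases hlt : ∃ a ∈ s, f a < g a
  · obtain ⟨a, ha, hlt⟩ := hlt
    have h := forall_lt_of_forall_ne hs hf.continuousOn hg.continuousOn hne ha hlt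
    exact Or.inl (closure_minimal (fun x hx => (h x hx).le) (isClosed_le hf hg))
  · push Not at hlt
    exact Or.inr (closure_minimal hlt (isClosed_le hg hf))

end Preconnected

/-! ### Paths across a strip -/

/-- `L` is a directed path of `Γ` crossing the strip of abscissae between `x₀` and `x₁`. The ends
are prescribed by their abscissae only, so that envelopes of paths are again of this kind. -/
structure IsStripPath (Γ : PlanarNetwork) (x₀ x₁ : ℝ) (L : List (ℝ × ℝ)) : Prop where
  lt : x₀ < x₁
  chain : L.IsChain fun u v => (u, v) ∈ Γ.E
  head : ∃ u ∈ L.head?, u.1 = x₀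
  last : ∃ v ∈ L.getLast?, v.1 = x₁

/-- Over the strip between `x₀` and `x₁`, the path `L` follows `p` up to the abscissa `x` and then
`q`, and it has the weights of both. -/
structure IsConcat {α : Type*} [AddCommMonoid α] (ε : (ℝ × ℝ) × (ℝ × ℝ) → α) (x₀ x x₁ : ℝ)
    (p q L : List (ℝ × ℝ)) : Prop where
  eqOn_left : EqOn (pathHeight L) (pathHeight p) (Icc x₀ x)
  eqOn_right : EqOn (pathHeight L) (pathHeight q) (Icc x x₁)
  weight_eq : pathWeight ε L = pathWeight ε p + pathWeight ε q

lemma PlanarNetwork.forall_mem_V_of_isChain (Γ : PlanarNetwork) {u v : ℝ × ℝ}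
    {L : List (ℝ × ℝ)} (h : (u :: v :: L).IsChain fun u v => (u, v) ∈ Γ.E) :
    ∀ w ∈ u :: v :: L, w ∈ Γ.V := by
  obtain ⟨huv, hL⟩ := List.isChain_cons_cons.1 h
  obtain ⟨hu, hv, -⟩ := Γ.ends _ huv
  refine List.forall_mem_cons.2 ⟨hu, ?_⟩
  induction L generalizing u v with
  | nil => simpa using hv
  | cons w L ih =>
    obtain ⟨hvw, hL'⟩ := List.isChain_cons_cons.1 hL
    exact List.forall_mem_cons.2 ⟨hv, ih hL hvw hL' hv (Γ.ends _ hvw).2.1⟩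

namespace IsStripPath

variable {Γ : PlanarNetwork} {x₀ x x₁ : ℝ} {L p q l₁ l₂ : List (ℝ × ℝ)} {v : ℝ × ℝ}

lemma isRightward (h : IsStripPath Γ x₀ x₁ L) : IsRightward L :=
  List.isChain_iff_pairwise.1 (h.chain.imp fun u v huv => (Γ.ends (u, v) huv).2.2)

lemma mem_V (h : IsStripPath Γ x₀ x₁ L) : ∀ v ∈ L, v ∈ Γ.V := by
  obtain ⟨hlt, hc, ⟨u, hu, rfl⟩, ⟨v, hv, rfl⟩⟩ := h
  match L with
  | [] => simp
  | [w] =>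
    obtain rfl : w = u := by simpa using hu
    obtain rfl : w = v := by simpa using hv
    exact absurd hlt (lt_irrefl _)
  | _ :: _ :: _ => exact Γ.forall_mem_V_of_isChain hc

lemma fst_mem_Icc (h : IsStripPath Γ x₀ x₁ L) (hv : v ∈ L) : v.1 ∈ Icc x₀ x₁ := by
  have hr := h.isRightward
  obtain ⟨-, -, ⟨u, hu, rfl⟩, ⟨w, hw, rfl⟩⟩ := h
  constructor
  · obtain ⟨l, rfl⟩ := List.head?_eq_some_iff.1 hu
    rcases List.mem_cons.1 hv with rfl | hv
    · exact le_rfl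
    · exact (List.rel_of_pairwise_cons hr hv).le
  · obtain ⟨l, rfl⟩ := List.getLast?_eq_some_iff.1 hw
    rcases List.mem_append.1 hv with hv | hv
    · exact ((List.pairwise_append.1 hr).2.2 v hv w (List.mem_singleton_self w)).le
    · rw [List.mem_singleton.1 hv]

lemma head?_eq (h : IsStripPath Γ x₀ x₁ L) : L.head? = some (x₀, pathHeight L x₀) := by
  obtain ⟨u, hu, rfl⟩ := h.head
  rw [pathHeight_of_mem h.isRightward (List.mem_of_head? hu)]
  exact hu

lemma getLast?_eq (h : IsStripPath Γ x₀ x₁ L) : L.getLast? = some (x₁, pathHeight L x₁) := by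
  obtain ⟨u, hu, rfl⟩ := h.last
  rw [pathHeight_of_mem h.isRightward (List.mem_of_getLast? hu)]
  exact hu

lemma split (h : IsStripPath Γ x₀ x₁ (l₁ ++ v :: l₂)) (hv : v.1 ∈ Ioo x₀ x₁) :
    IsStripPath Γ x₀ v.1 (l₁ ++ [v]) ∧ IsStripPath Γ v.1 x₁ (v :: l₂) := by
  obtain ⟨hc₁, hc₂⟩ := List.isChain_split.1 h.chain
  refine ⟨⟨hv.1, hc₁, ?_, v, by simp, rfl⟩, hv.2, hc₂, ⟨v, rfl, rfl⟩, ?_⟩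
  · have := h.head
    cases l₁ <;> simpa using this
  · simpa [List.getLast?_append] using h.last

lemma append (h₁ : IsStripPath Γ x₀ v.1 (l₁ ++ [v])) (h₂ : IsStripPath Γ v.1 x₁ (v :: l₂)) :
    IsStripPath Γ x₀ x₁ (l₁ ++ v :: l₂) := by
  refine ⟨h₁.lt.trans h₂.lt, List.isChain_split.2 ⟨h₁.chain, h₂.chain⟩, ?_, ?_⟩
  · have := h₁.head
    cases l₁ <;> simpa using this
  · simpa [List.getLast?_append] using h₂.last

section Weighted

variable {α : Type*} [AddCommMonoid α] (ε : (ℝ × ℝ) × (ℝ × ℝ) → α)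

lemma isConcat (h : IsStripPath Γ x₀ x₁ (l₁ ++ v :: l₂)) :
    IsConcat ε x₀ v.1 x₁ (l₁ ++ [v]) (v :: l₂) (l₁ ++ v :: l₂) := by
  refine ⟨?_, fun x hx => pathHeight_append_of_fst_le h.isRightward hx.1,
    pathWeight_append ε l₁ l₂ v⟩
  obtain ⟨u, hu, rfl⟩ := h.head
  exact pathHeight_eqOn_of_infix h.isRightward ⟨[], l₂, by simp⟩
    (by cases l₁ <;> simpa using hu) (by simp)

lemma exists_isConcat (hp : IsStripPath Γ x₀ x p) (hq : IsStripPath Γ x x₁ q)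
    (hpq : pathHeight p x = pathHeight q x) :
    ∃ L, IsStripPath Γ x₀ x₁ L ∧ IsConcat ε x₀ x x₁ p q L := by
  obtain ⟨v, hv, rfl⟩ := hp.last
  have hqv : q.head? = some v := by
    rw [hq.head?_eq, ← hpq, pathHeight_of_mem hp.isRightward (List.mem_of_getLast? hv)]
  obtain ⟨l₁, rfl⟩ := List.getLast?_eq_some_iff.1 hv
  obtain ⟨l₂, rfl⟩ := List.head?_eq_some_iff.1 hqv
  have hL := append hp hq
  exact ⟨_, hL, hL.isConcat ε⟩

end Weighted

lemma mem_or_exists_mem_openSegment (h : IsStripPath Γ x₀ x₁ L) (hx : x ∈ Icc x₀ x₁) :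
    (x, pathHeight L x) ∈ L ∨ ∃ u v, [u, v] <:+: L ∧ (u, v) ∈ Γ.E ∧ x ∈ Icc u.1 v.1 ∧
      (x, pathHeight L x) ∈ openSegment ℝ u v := by
  rcases exists_eq_or_exists_infix_lt Prod.fst h.head?_eq h.getLast?_eq hx.1 hx.2 with
    ⟨v, hv, rfl⟩ | ⟨u, v, huv, hux, hxv⟩
  · rw [pathHeight_of_mem h.isRightward hv]
    exact Or.inl hv
  · have hE : (u, v) ∈ Γ.E := List.isChain_pair.1 (h.chain.infix huv)
    have hx' : x ∈ Icc u.1 v.1 := ⟨hux.le, hxv.le⟩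
    rw [pathHeight_eqOn_lineHeight h.isRightward huv hx']
    exact Or.inr ⟨u, v, huv, hE, hx', lineHeight_mem_openSegment hux hxv⟩

/-- By planarity, paths that meet at an abscissa share a vertex or an edge there; `u = v` in the
former case. -/
lemma exists_common_vertices (hp : IsStripPath Γ x₀ x₁ p) (hq : IsStripPath Γ x₀ x₁ q)
    (hx : x ∈ Icc x₀ x₁) (h : pathHeight p x = pathHeight q x) :
    ∃ u v, (u ∈ p ∧ u ∈ q) ∧ (v ∈ p ∧ v ∈ q) ∧ x ∈ Icc u.1 v.1 ∧
      EqOn (pathHeight p) (pathHeight q) (Icc u.1 v.1) := by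
  rcases hp.mem_or_exists_mem_openSegment hx with hxp | ⟨u, v, huv, huvE, hxuv, hxp⟩ <;>
    rcases hq.mem_or_exists_mem_openSegment hx with hxq | ⟨u', v', huv', huvE', -, hxq⟩ <;>
    rw [← h] at hxq
  · refine ⟨_, _, ⟨hxp, hxq⟩, ⟨hxp, hxq⟩, ⟨le_rfl, le_rfl⟩, fun y hy => ?_⟩
    rwa [le_antisymm hy.2 hy.1]
  · exact absurd hxq (Γ.embedV _ huvE' _ (hp.mem_V _ hxp))
  · exact absurd hxp (Γ.embedV _ huvE _ (hq.mem_V _ hxq))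
  · by_cases he : (u, v) = (u', v')
    · obtain ⟨rfl, rfl⟩ := Prod.mk.inj he
      exact ⟨u, v, ⟨huv.subset (by simp), huv'.subset (by simp)⟩,
        ⟨huv.subset (by simp), huv'.subset (by simp)⟩, hxuv,
        (pathHeight_eqOn_lineHeight hp.isRightward huv).trans
          (pathHeight_eqOn_lineHeight hq.isRightward huv').symm⟩
    · exact absurd (openSegment_subset_segment ℝ _ _ hxq) (Γ.embed _ huvE _ huvE' he _ hxp)

lemma forall_lt_of_disjoint (hp : IsStripPath Γ x₀ x₁ p) (hq : IsStripPath Γ x₀ x₁ q)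
    (hd : ∀ v ∈ p, v ∉ q) (hlt : pathHeight p x₀ < pathHeight q x₀) :
    ∀ x ∈ Icc x₀ x₁, pathHeight p x < pathHeight q x := by
  refine forall_lt_of_forall_ne isPreconnected_Icc
    (continuous_pathHeight hp.isRightward).continuousOn
    (continuous_pathHeight hq.isRightward).continuousOn (fun x hx heq => ?_)
    (left_mem_Icc.2 hp.lt.le) hlt
  obtain ⟨u, -, ⟨hup, huq⟩, -⟩ := hp.exists_common_vertices hq hx heq
  exact hd u hup huq

lemma le_or_ge_of_forall_notMem_Ioo (hp : IsStripPath Γ x₀ x₁ p) (hq : IsStripPath Γ x₀ x₁ q)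
    (h : ∀ v ∈ p, v ∈ q → v.1 ∉ Ioo x₀ x₁) :
    (∀ x ∈ Icc x₀ x₁, pathHeight p x ≤ pathHeight q x) ∨
      ∀ x ∈ Icc x₀ x₁, pathHeight q x ≤ pathHeight p x := by
  by_cases hne : ∀ x ∈ Ioo x₀ x₁, pathHeight p x ≠ pathHeight q x
  · rw [← closure_Ioo hp.lt.ne]
    exact forall_mem_closure_le_or_ge isPreconnected_Ioo (continuous_pathHeight hp.isRightward)
      (continuous_pathHeight hq.isRightward) hne
  push Not at hne
  obtain ⟨x, hx, heq⟩ := hne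
  obtain ⟨u, v, ⟨hup, huq⟩, ⟨hvp, hvq⟩, hxuv, huv⟩ :=
    hp.exists_common_vertices hq (Ioo_subset_Icc_self hx) heq
  have hu : u.1 ≤ x₀ := not_lt.1 fun hlt => h u hup huq ⟨hlt, hxuv.1.trans_lt hx.2⟩
  have hv : x₁ ≤ v.1 := not_lt.1 fun hlt => h v hvp hvq ⟨hx.1.trans_le hxuv.2, hlt⟩
  exact Or.inl fun y hy => (huv ⟨hu.trans hy.1, hy.2.trans hv⟩).le

end IsStripPath

/-! ### Envelopes -/

/-- `m` and `M` are paths running along the lower and the upper envelope of `p` and `q` over the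
strip between `x₀` and `x₁`, with the same total weight as `p` and `q`. -/
structure IsEnvelopePair {α : Type*} [AddCommMonoid α] (Γ : PlanarNetwork)
    (ε : (ℝ × ℝ) × (ℝ × ℝ) → α) (x₀ x₁ : ℝ) (p q m M : List (ℝ × ℝ)) : Prop where
  lower : IsStripPath Γ x₀ x₁ m
  upper : IsStripPath Γ x₀ x₁ M
  lower_eq : ∀ x ∈ Icc x₀ x₁, pathHeight m x = min (pathHeight p x) (pathHeight q x)
  upper_eq : ∀ x ∈ Icc x₀ x₁, pathHeight M x = max (pathHeight p x) (pathHeight q x)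
  weight_eq : pathWeight ε m + pathWeight ε M = pathWeight ε p + pathWeight ε q

section Envelopes

variable {α : Type*} [AddCommMonoid α] {ε : (ℝ × ℝ) × (ℝ × ℝ) → α} {Γ : PlanarNetwork}
  {x₀ x x₁ : ℝ} {p p₁ p₂ q q₁ q₂ m₁ m₂ M₁ M₂ : List (ℝ × ℝ)}

lemma IsConcat.exists_pathHeight_eq (op : ℝ → ℝ → ℝ) (hp : IsConcat ε x₀ x x₁ p₁ p₂ p)
    (hq : IsConcat ε x₀ x x₁ q₁ q₂ q) (hm₁ : IsStripPath Γ x₀ x m₁)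
    (hm₂ : IsStripPath Γ x x₁ m₂)
    (h₁ : ∀ y ∈ Icc x₀ x, pathHeight m₁ y = op (pathHeight p₁ y) (pathHeight q₁ y))
    (h₂ : ∀ y ∈ Icc x x₁, pathHeight m₂ y = op (pathHeight p₂ y) (pathHeight q₂ y)) :
    ∃ m, IsStripPath Γ x₀ x₁ m ∧
      (∀ y ∈ Icc x₀ x₁, pathHeight m y = op (pathHeight p y) (pathHeight q y)) ∧
      pathWeight ε m = pathWeight ε m₁ + pathWeight ε m₂ := by
  have left : ∀ y ∈ Icc x₀ x, pathHeight m₁ y = op (pathHeight p y) (pathHeight q y) :=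
    fun y hy => by rw [h₁ y hy, hp.eqOn_left hy, hq.eqOn_left hy]
  have right : ∀ y ∈ Icc x x₁, pathHeight m₂ y = op (pathHeight p y) (pathHeight q y) :=
    fun y hy => by rw [h₂ y hy, hp.eqOn_right hy, hq.eqOn_right hy]
  have hx : pathHeight m₁ x = pathHeight m₂ x := by
    rw [left x (right_mem_Icc.2 hm₁.lt.le), right x (left_mem_Icc.2 hm₂.lt.le)]
  obtain ⟨m, hm, hmc⟩ := hm₁.exists_isConcat ε hm₂ hx
  refine ⟨m, hm, fun y hy => ?_, hmc.weight_eq⟩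
  rcases le_total y x with hyx | hxy
  · rw [hmc.eqOn_left ⟨hy.1, hyx⟩, left y ⟨hy.1, hyx⟩]
  · rw [hmc.eqOn_right ⟨hxy, hy.2⟩, right y ⟨hxy, hy.2⟩]

lemma IsEnvelopePair.exists_concat (hp : IsConcat ε x₀ x x₁ p₁ p₂ p)
    (hq : IsConcat ε x₀ x x₁ q₁ q₂ q) (h₁ : IsEnvelopePair Γ ε x₀ x p₁ q₁ m₁ M₁)
    (h₂ : IsEnvelopePair Γ ε x x₁ p₂ q₂ m₂ M₂) : ∃ m M, IsEnvelopePair Γ ε x₀ x₁ p q m M := by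
  obtain ⟨m, hm, hm_eq, hmw⟩ :=
    hp.exists_pathHeight_eq min hq h₁.lower h₂.lower h₁.lower_eq h₂.lower_eq
  obtain ⟨M, hM, hM_eq, hMw⟩ :=
    hp.exists_pathHeight_eq max hq h₁.upper h₂.upper h₁.upper_eq h₂.upper_eq
  refine ⟨m, M, hm, hM, hm_eq, hM_eq, ?_⟩
  rw [hmw, hMw, add_add_add_comm, h₁.weight_eq, h₂.weight_eq, hp.weight_eq, hq.weight_eq,
    add_add_add_comm]

theorem IsStripPath.exists_isEnvelopePair (ε : (ℝ × ℝ) × (ℝ × ℝ) → α)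
    (hp : IsStripPath Γ x₀ x₁ p) (hq : IsStripPath Γ x₀ x₁ q) :
    ∃ m M, IsEnvelopePair Γ ε x₀ x₁ p q m M := by
  induction hN : p.length using Nat.strong_induction_on generalizing x₀ x₁ p q with
  | _ N ih =>
  subst hN
  by_cases h : ∀ v ∈ p, v ∈ q → v.1 ∉ Ioo x₀ x₁
  · rcases hp.le_or_ge_of_forall_notMem_Ioo hq h with h | h
    · exact ⟨p, q, hp, hq, fun x hx => (min_eq_left (h x hx)).symm,
        fun x hx => (max_eq_right (h x hx)).symm, rfl⟩
    · exact ⟨q, p, hq, hp, fun x hx => (min_eq_right (h x hx)).symm,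
        fun x hx => (max_eq_left (h x hx)).symm, add_comm _ _⟩
  · push Not at h
    obtain ⟨v, hvp, hvq, hv⟩ := h
    obtain ⟨p₁, p₂, rfl⟩ := List.append_of_mem hvp
    obtain ⟨q₁, q₂, rfl⟩ := List.append_of_mem hvq
    obtain ⟨hp₁, hp₂⟩ := hp.split hv
    obtain ⟨hq₁, hq₂⟩ := hq.split hv
    have hp₁_ne : p₁ ≠ [] := by
      rintro rfl
      simpa [hv.1.ne'] using hp₁.head
    have hp₂_ne : p₂ ≠ [] := by
      rintro rfl
      simpa [hv.2.ne] using hp₂.last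
    have hlen₁ : 0 < p₁.length := List.length_pos_iff.2 hp₁_ne
    have hlen₂ : 0 < p₂.length := List.length_pos_iff.2 hp₂_ne
    obtain ⟨m₁, M₁, h₁⟩ := ih _ (by simpa using hlen₂) hp₁ hq₁ rfl
    obtain ⟨m₂, M₂, h₂⟩ := ih _ (by simpa using hlen₁) hp₂ hq₂ rfl
    exact h₁.exists_concat (hp.isConcat ε) (hq.isConcat ε) h₂

end Envelopes

/-! ### Source-to-sink paths and their heights -/

section BoundedPaths

variable {Γ : PlanarNetwork} {k l : ℕ} {L p q : List (ℝ × ℝ)}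

lemma isBoundedPath_iff :
    IsBoundedPath Γ k L ↔
      IsStripPath Γ Γ.a Γ.b L ∧ pathHeight L Γ.a ≤ k ∧ pathHeight L Γ.b ≤ k := by
  constructor
  · rintro ⟨p, q, ⟨-, hc, hp, hq⟩, hpa, hqb, hpk, hqk⟩
    have h : IsStripPath Γ Γ.a Γ.b L := ⟨Γ.hab, hc, ⟨p, hp, hpa⟩, ⟨q, hq, hqb⟩⟩
    refine ⟨h, ?_, ?_⟩
    · rwa [← hpa, pathHeight_of_mem h.isRightward (List.mem_of_head? hp)]
    · rwa [← hqb, pathHeight_of_mem h.isRightward (List.mem_of_getLast? hq)]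
  · rintro ⟨h, ha, hb⟩
    exact ⟨_, _, ⟨by rintro rfl; simpa using h.head?_eq, h.chain, h.head?_eq, h.getLast?_eq⟩,
      rfl, rfl, ha, hb⟩

namespace IsBoundedPath

lemma isStripPath (h : IsBoundedPath Γ k L) : IsStripPath Γ Γ.a Γ.b L :=
  (isBoundedPath_iff.1 h).1

lemma of_pathHeight_le (hkl : k ≤ l) (hq : IsBoundedPath Γ k q) (hp : IsStripPath Γ Γ.a Γ.b p)
    (ha : pathHeight p Γ.a ≤ pathHeight q Γ.a) (hb : pathHeight p Γ.b ≤ pathHeight q Γ.b) :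
    IsBoundedPath Γ l p := by
  obtain ⟨-, hqa, hqb⟩ := isBoundedPath_iff.1 hq
  have hkl' : (k : ℝ) ≤ l := by exact_mod_cast hkl
  exact isBoundedPath_iff.2 ⟨hp, ha.trans (hqa.trans hkl'), hb.trans (hqb.trans hkl')⟩

lemma mono (hkl : k ≤ l) (h : IsBoundedPath Γ k L) : IsBoundedPath Γ l L :=
  of_pathHeight_le hkl h h.isStripPath le_rfl le_rfl

lemma exists_isEnvelopePair {α : Type*} [AddCommMonoid α] (ε : (ℝ × ℝ) × (ℝ × ℝ) → α)
    (hkl : k ≤ l) (hp : IsBoundedPath Γ k p) (hq : IsBoundedPath Γ l q) :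
    ∃ m M, IsEnvelopePair Γ ε Γ.a Γ.b p q m M ∧ IsBoundedPath Γ k m ∧ IsBoundedPath Γ l M := by
  obtain ⟨m, M, h⟩ := hp.isStripPath.exists_isEnvelopePair ε hq.isStripPath
  have ha : Γ.a ∈ Icc Γ.a Γ.b := left_mem_Icc.2 Γ.hab.le
  have hb : Γ.b ∈ Icc Γ.a Γ.b := right_mem_Icc.2 Γ.hab.le
  obtain ⟨-, hpa, hpb⟩ := isBoundedPath_iff.1 (hp.mono hkl)
  obtain ⟨-, hqa, hqb⟩ := isBoundedPath_iff.1 hq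
  refine ⟨m, M, h, of_pathHeight_le le_rfl hp h.lower ?_ ?_,
    isBoundedPath_iff.2 ⟨h.upper, ?_, ?_⟩⟩
  · exact (h.lower_eq _ ha).trans_le (min_le_left _ _)
  · exact (h.lower_eq _ hb).trans_le (min_le_left _ _)
  · exact (h.upper_eq _ ha).trans_le (max_le hpa hqa)
  · exact (h.upper_eq _ hb).trans_le (max_le hpb hqb)

end IsBoundedPath

/-- All sources and sinks have integral heights, so that a path strictly below a path of `Γ^{(k+1)}`
already belongs to `Γ^{(k)}`. -/
def PlanarNetwork.HasIntegralBoundary (Γ : PlanarNetwork) : Prop :=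
  ∀ p ∈ Γ.V, p.1 = Γ.a ∨ p.1 = Γ.b → ∃ j : ℤ, p.2 = j

lemma PlanarNetwork.HasRank.hasIntegralBoundary {n : ℕ} (hΓ : Γ.HasRank n) :
    Γ.HasIntegralBoundary := by
  rintro p hp (ha | hb)
  · obtain ⟨j, -, -, hj⟩ := hΓ.1 p hp ha
    exact ⟨j, by exact_mod_cast hj⟩
  · obtain ⟨j, -, -, hj⟩ := hΓ.2.1 p hp hb
    exact ⟨j, by exact_mod_cast hj⟩

lemma PlanarNetwork.HasIntegralBoundary.isBoundedPath_of_lt (hΓ : Γ.HasIntegralBoundary)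
    (hq : IsBoundedPath Γ (k + 1) q) (hp : IsStripPath Γ Γ.a Γ.b p)
    (ha : pathHeight p Γ.a < pathHeight q Γ.a) (hb : pathHeight p Γ.b < pathHeight q Γ.b) :
    IsBoundedPath Γ k p := by
  have le_of_lt {y : ℝ} (hy : ∃ j : ℤ, y = j) (hlt : y < (k + 1 : ℕ)) : y ≤ k := by
    obtain ⟨j, rfl⟩ := hy
    exact_mod_cast Int.lt_add_one_iff.1 (by exact_mod_cast hlt : j < (k : ℤ) + 1)
  obtain ⟨-, hqa, hqb⟩ := isBoundedPath_iff.1 hq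
  exact isBoundedPath_iff.2 ⟨hp,
    le_of_lt (hΓ _ (hp.mem_V _ (List.mem_of_head? hp.head?_eq)) (Or.inl rfl)) (ha.trans_le hqa),
    le_of_lt (hΓ _ (hp.mem_V _ (List.mem_of_getLast? hp.getLast?_eq)) (Or.inr rfl))
      (hb.trans_le hqb)⟩

end BoundedPaths

/-! ### Exchanging paths between multipaths -/

/-- A multipath of `Γ^{(k)}` whose paths are numbered from bottom to top. -/
structure IsSortedMultipath (Γ : PlanarNetwork) (k : ℕ) {m : ℕ}
    (F : Fin m → List (ℝ × ℝ)) : Prop where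
  isBoundedPath : ∀ j, IsBoundedPath Γ k (F j)
  strictMono : ∀ x ∈ Icc Γ.a Γ.b, StrictMono fun j => pathHeight (F j) x

section Multipaths

variable {Γ : PlanarNetwork} {k l m : ℕ}

lemma IsSortedMultipath.pairwiseVertexDisjoint {F : Fin m → List (ℝ × ℝ)}
    (hF : IsSortedMultipath Γ k F) : PairwiseVertexDisjoint F := by
  intro i j hij v hvi hvj
  have hi := (hF.isBoundedPath i).isStripPath
  have hj := (hF.isBoundedPath j).isStripPath
  refine hij ((hF.strictMono v.1 (hi.fst_mem_Icc hvi)).injective ?_)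
  exact (pathHeight_of_mem hi.isRightward hvi).trans (pathHeight_of_mem hj.isRightward hvj).symm

lemma PairwiseVertexDisjoint.exists_perm_isSortedMultipath {F : Fin m → List (ℝ × ℝ)}
    (hd : PairwiseVertexDisjoint F) (hF : ∀ j, IsBoundedPath Γ k (F j)) :
    ∃ σ : Equiv.Perm (Fin m), IsSortedMultipath Γ k (F ∘ σ) := by
  set height : Fin m → ℝ := fun j => pathHeight (F j) Γ.a
  have mem_of_height : ∀ j, (Γ.a, height j) ∈ F j := fun j =>
    List.mem_of_head? (hF j).isStripPath.head?_eq
  have height_injective : Function.Injective height := by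
    intro i j hij
    by_contra hne
    exact hd i j hne _ (mem_of_height i) (hij ▸ mem_of_height j)
  have sorted : StrictMono (height ∘ Tuple.sort height) :=
    (Tuple.monotone_sort height).strictMono_of_injective
      (height_injective.comp (Tuple.sort height).injective)
  refine ⟨Tuple.sort height, fun j => hF _, fun x hx i j hij => ?_⟩
  exact (hF _).isStripPath.forall_lt_of_disjoint (hF _).isStripPath
    (hd _ _ ((Tuple.sort height).injective.ne hij.ne)) (sorted hij) x hx

lemma mem_boundedWeights_iff {ε : (ℝ × ℝ) × (ℝ × ℝ) → ℝ} {w : ℝ} :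
    w ∈ boundedWeights Γ ε m k ↔
      ∃ F : Fin m → List (ℝ × ℝ), IsSortedMultipath Γ k F ∧ w = ∑ j, pathWeight ε (F j) := by
  constructor
  · rintro ⟨F, hF, hd, rfl⟩
    obtain ⟨σ, hσ⟩ := hd.exists_perm_isSortedMultipath hF
    exact ⟨F ∘ σ, hσ, (Equiv.sum_comp σ fun j => pathWeight ε (F j)).symm⟩
  · rintro ⟨F, hF, rfl⟩
    exact ⟨F, hF.isBoundedPath, hF.pairwiseVertexDisjoint, rfl⟩

namespace IsSortedMultipath

variable {α : Type*} [AddCommMonoid α] (ε : (ℝ × ℝ) × (ℝ × ℝ) → α)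
  {A B F : Fin m → List (ℝ × ℝ)}

lemma cons {p : List (ℝ × ℝ)} (hF : IsSortedMultipath Γ k F) (hp : IsBoundedPath Γ k p)
    (hlt : ∀ x ∈ Icc Γ.a Γ.b, ∀ j, pathHeight p x < pathHeight (F j) x) :
    IsSortedMultipath Γ k (Fin.cons p F : Fin (m + 1) → List (ℝ × ℝ)) := by
  refine ⟨Fin.cases hp hF.isBoundedPath, fun x hx => ?_⟩
  have h := Fin.strictMono_cons.2 ⟨hlt x hx, hF.strictMono x hx⟩
  convert h using 1
  ext j
  cases j using Fin.cases <;> rfl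

lemma snoc {p : List (ℝ × ℝ)} (hF : IsSortedMultipath Γ k F) (hp : IsBoundedPath Γ k p)
    (hlt : ∀ x ∈ Icc Γ.a Γ.b, ∀ j, pathHeight (F j) x < pathHeight p x) :
    IsSortedMultipath Γ k (Fin.snoc F p : Fin (m + 1) → List (ℝ × ℝ)) := by
  refine ⟨Fin.lastCases (by simpa using hp) (by simpa using hF.isBoundedPath), fun x hx => ?_⟩
  intro i j hij
  cases j using Fin.lastCases with
  | last =>
    obtain ⟨i, rfl⟩ := Fin.exists_castSucc_eq.2 hij.ne
    simpa using hlt x hx i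
  | cast j =>
    obtain ⟨i, rfl⟩ := Fin.exists_castSucc_eq.2 (hij.trans (Fin.castSucc_lt_last j)).ne
    simpa using hF.strictMono x hx (Fin.castSucc_lt_castSucc_iff.1 hij)

lemma exists_exchange {B : Fin (m + 1) → List (ℝ × ℝ)} (hkl : k ≤ l)
    (hA : IsSortedMultipath Γ l A) (hB : IsSortedMultipath Γ k B) :
    ∃ (C : Fin m → List (ℝ × ℝ)) (D : Fin (m + 1) → List (ℝ × ℝ)),
      IsSortedMultipath Γ k C ∧ IsSortedMultipath Γ l D ∧
      (∀ x ∈ Icc Γ.a Γ.b, ∀ j : Fin m, pathHeight (C j) x ≤ pathHeight (B j.succ) x) ∧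
      ∑ j, pathWeight ε (C j) + ∑ j, pathWeight ε (D j) =
        ∑ j, pathWeight ε (A j) + ∑ j, pathWeight ε (B j) := by
  choose C U hE hC hU using fun j : Fin m =>
    (hB.isBoundedPath j.succ).exists_isEnvelopePair ε hkl (hA.isBoundedPath j)
  have hC_sorted : IsSortedMultipath Γ k C := by
    refine ⟨hC, fun x hx i j hij => ?_⟩
    simp only [(hE _).lower_eq x hx]
    exact min_lt_min (hB.strictMono x hx (Fin.succ_lt_succ_iff.2 hij)) (hA.strictMono x hx hij)
  have hU_sorted : IsSortedMultipath Γ l U := by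
    refine ⟨hU, fun x hx i j hij => ?_⟩
    simp only [(hE _).upper_eq x hx]
    exact max_lt_max (hB.strictMono x hx (Fin.succ_lt_succ_iff.2 hij)) (hA.strictMono x hx hij)
  have hB_zero_lt : ∀ x ∈ Icc Γ.a Γ.b, ∀ j, pathHeight (B 0) x < pathHeight (U j) x := by
    intro x hx j
    rw [(hE j).upper_eq x hx]
    exact lt_max_of_lt_left (hB.strictMono x hx (Fin.succ_pos j))
  refine ⟨C, Fin.cons (B 0) U, hC_sorted,
    hU_sorted.cons ((hB.isBoundedPath 0).mono hkl) hB_zero_lt, fun x hx j => ?_, ?_⟩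
  · rw [(hE j).lower_eq x hx]
    exact min_le_left _ _
  · have hw : ∑ j, pathWeight ε (C j) + ∑ j, pathWeight ε (U j) =
        ∑ j : Fin m, pathWeight ε (B j.succ) + ∑ j, pathWeight ε (A j) := by
      simp only [← Finset.sum_add_distrib, (hE _).weight_eq]
    simp only [Fin.sum_univ_succ, Fin.cons_zero, Fin.cons_succ]
    rw [add_left_comm, hw, add_comm (∑ j, pathWeight ε (A j)), add_assoc]

lemma castSucc {F : Fin (m + 1) → List (ℝ × ℝ)} (hΓ : Γ.HasIntegralBoundary)
    (hF : IsSortedMultipath Γ (k + 1) F) : IsSortedMultipath Γ k fun j => F (Fin.castSucc j) := by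
  have lt_last : ∀ j : Fin m, ∀ x ∈ Icc Γ.a Γ.b,
      pathHeight (F j.castSucc) x < pathHeight (F (Fin.last m)) x :=
    fun j x hx => hF.strictMono x hx (Fin.castSucc_lt_last j)
  refine ⟨fun j => ?_, fun x hx => (hF.strictMono x hx).comp Fin.strictMono_castSucc⟩
  exact hΓ.isBoundedPath_of_lt (hF.isBoundedPath (Fin.last m))
    (hF.isBoundedPath j.castSucc).isStripPath (lt_last j _ (left_mem_Icc.2 Γ.hab.le))
    (lt_last j _ (right_mem_Icc.2 Γ.hab.le))

lemma exists_exchange_last {A : Fin (m + 2) → List (ℝ × ℝ)} (hΓ : Γ.HasIntegralBoundary)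
    (hA : IsSortedMultipath Γ (k + 1) A) (hB : IsSortedMultipath Γ k B) :
    ∃ C D : Fin (m + 1) → List (ℝ × ℝ),
      IsSortedMultipath Γ (k + 1) C ∧ IsSortedMultipath Γ k D ∧
      ∑ j, pathWeight ε (C j) + ∑ j, pathWeight ε (D j) =
        ∑ j, pathWeight ε (A j) + ∑ j, pathWeight ε (B j) := by
  obtain ⟨C, D, hC, hD, hCA, hw⟩ := exists_exchange ε le_rfl hB (hA.castSucc hΓ)
  have hC_lt : ∀ x ∈ Icc Γ.a Γ.b, ∀ j,
      pathHeight (C j) x < pathHeight (A (Fin.last (m + 1))) x := fun x hx j =>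
    (hCA x hx j).trans_lt (hA.strictMono x hx (Fin.castSucc_lt_last j.succ))
  have hC_mono : IsSortedMultipath Γ (k + 1) C :=
    ⟨fun j => (hC.isBoundedPath j).mono k.le_succ, hC.strictMono⟩
  refine ⟨Fin.snoc C (A (Fin.last (m + 1))), D, hC_mono.snoc (hA.isBoundedPath _) hC_lt, hD, ?_⟩
  rw [Fin.sum_univ_castSucc, Fin.sum_univ_castSucc fun j => pathWeight ε (A j)]
  simp only [Fin.snoc_castSucc, Fin.snoc_last]
  rw [add_right_comm, hw, add_comm (∑ j, pathWeight ε (B j)), add_right_comm]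

end IsSortedMultipath

theorem boundedWeights_add_succ_subset (Γ : PlanarNetwork) (ε : (ℝ × ℝ) × (ℝ × ℝ) → ℝ) (m : ℕ)
    (hkl : k ≤ l) :
    boundedWeights Γ ε m l + boundedWeights Γ ε (m + 1) k ⊆
      boundedWeights Γ ε (m + 1) l + boundedWeights Γ ε m k := by
  rintro _ ⟨_, hw, _, hw', rfl⟩
  obtain ⟨A, hA, rfl⟩ := mem_boundedWeights_iff.1 hw
  obtain ⟨B, hB, rfl⟩ := mem_boundedWeights_iff.1 hw'
  obtain ⟨C, D, hC, hD, -, hCD⟩ := hA.exists_exchange ε hkl hB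
  exact ⟨_, mem_boundedWeights_iff.2 ⟨D, hD, rfl⟩, _, mem_boundedWeights_iff.2 ⟨C, hC, rfl⟩,
    (add_comm _ _).trans hCD⟩

theorem PlanarNetwork.HasIntegralBoundary.boundedWeights_add_two_add_subset
    (hΓ : Γ.HasIntegralBoundary) (ε : (ℝ × ℝ) × (ℝ × ℝ) → ℝ) (m k : ℕ) :
    boundedWeights Γ ε (m + 2) (k + 1) + boundedWeights Γ ε m k ⊆
      boundedWeights Γ ε (m + 1) (k + 1) + boundedWeights Γ ε (m + 1) k := by
  rintro _ ⟨_, hw, _, hw', rfl⟩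
  obtain ⟨A, hA, rfl⟩ := mem_boundedWeights_iff.1 hw
  obtain ⟨B, hB, rfl⟩ := mem_boundedWeights_iff.1 hw'
  obtain ⟨C, D, hC, hD, hCD⟩ := hA.exists_exchange_last ε hΓ hB
  exact ⟨_, mem_boundedWeights_iff.2 ⟨C, hC, rfl⟩, _, mem_boundedWeights_iff.2 ⟨D, hD, rfl⟩, hCD⟩

end Multipaths

lemma isGreatest_add {α : Type*} [Add α] [Preorder α] [AddLeftMono α] [AddRightMono α]
    {s t : Set α} {a b : α} (hs : IsGreatest s a) (ht : IsGreatest t b) :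
    IsGreatest (s + t) (a + b) :=
  ⟨add_mem_add hs.1 ht.1, add_mem_upperBounds_add hs.2 ht.2⟩

theorem networks_interlacing_hive_general {Γ : PlanarNetwork} (hΓ : Γ.HasIntegralBoundary)
    {ε : (ℝ × ℝ) × (ℝ × ℝ) → ℝ} {t : ℕ → ℕ → ℝ} {i k : ℕ} (hi : 0 < i) (hk : 0 < k)
    (ht : ∀ j ∈ Icc (i - 1) (i + 1), IsGreatest (boundedWeights Γ ε j k) (t j k))
    (ht' : ∀ j ∈ Icc (i - 1) i, IsGreatest (boundedWeights Γ ε j (k - 1)) (t j (k - 1))) :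
    t i k + t (i - 1) (k - 1) ≥ t (i - 1) k + t i (k - 1) ∧
      t i k + t i (k - 1) ≥ t (i + 1) k + t (i - 1) (k - 1) := by
  obtain ⟨m, rfl⟩ := Nat.exists_eq_add_one.2 hi
  obtain ⟨l, rfl⟩ := Nat.exists_eq_add_one.2 hk
  simp only [Nat.add_sub_cancel] at ht ht' ⊢
  have upper₀ := ht m ⟨le_rfl, by lia⟩
  have upper₁ := ht (m + 1) ⟨by lia, by lia⟩
  have upper₂ := ht (m + 2) ⟨by lia, le_rfl⟩
  have lower₀ := ht' m ⟨le_rfl, by lia⟩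
  have lower₁ := ht' (m + 1) ⟨by lia, le_rfl⟩
  exact ⟨(isGreatest_add upper₀ lower₁).mono (isGreatest_add upper₁ lower₀)
      (boundedWeights_add_succ_subset Γ ε m l.le_succ),
    (isGreatest_add upper₂ lower₀).mono (isGreatest_add upper₁ lower₁)
      (hΓ.boundedWeights_add_two_add_subset ε m l)⟩

end

/-- Theorem `thm:GZ1`.  For a rank-`n` weighted planar
network `Γ`, the numbers `t i k = l_i Γ^{(k)} (ε)` — whenever they all exist
(are finite), i.e. are greatest elements of the corresponding sets of
multipath weights — satisfy the `C₂` rhombus inequalities. -/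
theorem networks_interlacing_hive (n : ℕ) (Γ : PlanarNetwork)
    (hΓ : Γ.HasRank n) (ε : (ℝ × ℝ) × (ℝ × ℝ) → ℝ) (t : ℕ → ℕ → ℝ)
    (ht : ∀ k, k ≤ n → ∀ i, i ≤ k → IsGreatest (boundedWeights Γ ε i k) (t i k)) :
    ∀ i k, 0 < i → i < k → k ≤ n →
      t i k + t (i - 1) (k - 1) ≥ t (i - 1) k + t i (k - 1) ∧
      t i k + t i (k - 1) ≥ t (i + 1) k + t (i - 1) (k - 1) := by
  intro i k hi hik hkn
  exact networks_interlacing_hive_general hΓ.hasIntegralBoundary hi (hi.trans hik)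
    (fun j hj => ht k hkn j (hj.2.trans hik))
    fun j hj => ht (k - 1) (by lia) j (hj.2.trans (Nat.le_sub_one_of_lt hik))
end

section
/- Hive inequalities for concatenated planar networks: let Γ and Δ be composable planar networks of rank n, and for 0 ≤ i ≤ k ≤ n and a real weighting ε of Γ∘Δ define m_i^k(ε) as the maximal total weight of a union of k pairwise disjoint paths in Γ from sources of Γ to sinks of Γ, of which i continue as pairwise disjoint paths in Δ to sinks of Δ. Then, whenever finite, these numbers satisfy all three families of hive (C_3) inequalities: m_i^k + m_{i-1}^{k-1} ≥ m_{i-1}^k + m_i^{k-1}, m_i^k + m_i^{k-1} ≥ m_{i+1}^k + m_{i-1}^{k-1}, and m_i^k + m_{i-1}^k ≥ m_i^{k+1} + m_{i-1}^{k-1}, for 0 < i ≤ k < n. -/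
open scoped BigOperators

/-- `Γ` and `Δ` are composable: the strip of `Δ` starts where that of `Γ`
ends, and the sources of `Δ` are among the sinks of `Γ`. -/
def Composable (Γ Δ : PlanarNetwork) : Prop :=
  Δ.a = Γ.b ∧ ∀ p ∈ Δ.V, p.1 = Δ.a → p ∈ Γ.V

/-- The set of total weights of `ΓΔ`-paths in `P_i^k`: unions of `k` pairwise
vertex-disjoint source-to-sink paths of `Γ`, of which `i` are continued by
pairwise vertex-disjoint source-to-sink paths of `Δ`. -/
def gdWeights (Γ Δ : PlanarNetwork) (ε : (ℝ × ℝ) × (ℝ × ℝ) → ℝ)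
    (i k : ℕ) : Set ℝ :=
  { x | ∃ (G : Fin k → List (ℝ × ℝ)) (D : Fin i → List (ℝ × ℝ)),
      (∀ j, IsThroughPath Γ (G j)) ∧ (∀ j, IsThroughPath Δ (D j)) ∧
      PairwiseVertexDisjoint G ∧ PairwiseVertexDisjoint D ∧
      (∀ j, ∃ m, (D j).head? = (G m).getLast?) ∧
      x = (∑ j, pathWeight ε (G j)) + (∑ j, pathWeight ε (D j)) }

/-!
A multipath is determined by its edge set, in which every vertex has at most one outgoing and at
most one incoming edge. Superpose the edge sets `X` and `Y` of two `ΓΔ`-paths and split every vertex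
into an out-half and an in-half. Each half meets at most one edge of `X` and one of `Y`; joining the
two halves of a vertex missed by `X` (or by `Y`) as well, `X` and `Y` become involutions on the
halves whose fixed points are the loose ends: the out-halves of last vertices and the in-halves of
first vertices. An orbit of the group generated by the two involutions contains at most two loose
ends, so if `X` has more paths than `Y` ending at a given level, then some orbit meets a last vertex
of `X` at that level but no last vertex of `Y` at that level. Exchanging `X` and `Y` on this orbit
preserves the total weight and moves one path end from `X` to `Y`, possibly against one path end of
`Y` at the other level. So a sum of weights of two `ΓΔ`-paths is also a sum of weights of two
`ΓΔ`-paths of the exchanged types, and taking maxima gives the three families of inequalities.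
-/

namespace PathSystem

/-! ### Orbits of two involutions -/

section Involutions

variable {H : Type*} {a b : Equiv.Perm H} {x : H}

theorem left_apply_zpow_mul (ha : a * a = 1) (hb : b * b = 1) (hx : a x = x) (n : ℤ) :
    a (((a * b) ^ n) x) = ((a * b) ^ (-n)) x := by
  have hconj : a * (a * b) ^ n * a⁻¹ = (a * b) ^ (-n) := by
    rw [← conj_zpow, ← mul_assoc, ha, one_mul, zpow_neg, ← inv_zpow, mul_inv_rev,
      inv_eq_of_mul_eq_one_left hb]
  rw [← hconj, Equiv.Perm.mul_apply, Equiv.Perm.mul_apply, Equiv.Perm.inv_eq_iff_eq.2 hx.symm]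

theorem right_apply_zpow_mul (ha : a * a = 1) (hb : b * b = 1) (hx : a x = x) (n : ℤ) :
    b (((a * b) ^ n) x) = ((a * b) ^ (-n - 1)) x := by
  have hab : b = a * (a * b) := by rw [← mul_assoc, ha, one_mul]
  calc b (((a * b) ^ n) x) = a (((a * b) ^ (1 + n)) x) := by
        rw [zpow_one_add, Equiv.Perm.mul_apply, ← Equiv.Perm.mul_apply a, ← hab]
    _ = ((a * b) ^ (-n - 1)) x := by
      rw [left_apply_zpow_mul ha hb hx, neg_add_rev, ← sub_eq_add_neg]

theorem sameCycle_apply_left (ha : a * a = 1) (hb : b * b = 1) (hx : a x = x) {y : H} :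
    (a * b).SameCycle x (a y) ↔ (a * b).SameCycle x y := by
  have key : ∀ y, (a * b).SameCycle x y → (a * b).SameCycle x (a y) := by
    rintro _ ⟨n, rfl⟩
    exact ⟨-n, (left_apply_zpow_mul ha hb hx n).symm⟩
  refine ⟨fun h => ?_, key y⟩
  simpa only [← Equiv.Perm.mul_apply, ha, Equiv.Perm.one_apply] using key _ h

theorem sameCycle_apply_right (ha : a * a = 1) (hb : b * b = 1) (hx : a x = x) {y : H} :
    (a * b).SameCycle x (b y) ↔ (a * b).SameCycle x y := by
  rw [← sameCycle_apply_left ha hb hx, ← Equiv.Perm.mul_apply, Equiv.Perm.sameCycle_apply_right]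

theorem zpow_apply_eq_zpow_apply_iff_dvd {f : Equiv.Perm H} {m n : ℤ} :
    (f ^ m) x = (f ^ n) x ↔ (Function.minimalPeriod f x : ℤ) ∣ m - n := by
  rw [show Function.minimalPeriod f x = Function.minimalPeriod (f • ·) x from rfl,
    ← MulAction.zpow_smul_eq_iff_minimalPeriod_dvd, sub_eq_neg_add, zpow_add, mul_smul, zpow_neg,
    inv_smul_eq_iff]
  rfl

/-- The orbit of `x` under `f` listed twice: `f ^ n x` is tagged `inl` at place `2 * n` and `inr` at
place `2 * n + 1`. For `f = a * b` with involutions `a`, `b` and `a x = x`, the points tagged `inl`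
that `a` fixes and the points tagged `inr` that `b` fixes are those at the places divisible by the
period of `x`. -/
def taggedOrbit (f : Equiv.Perm H) (x : H) (m : ℤ) : H ⊕ H :=
  if Even m then .inl ((f ^ (m / 2)) x) else .inr ((f ^ (m / 2)) x)

theorem taggedOrbit_eq_of_dvd {f : Equiv.Perm H} {m n : ℤ}
    (h : 2 * (Function.minimalPeriod f x : ℤ) ∣ m - n) : taggedOrbit f x m = taggedOrbit f x n := by
  obtain ⟨c, hc⟩ := h
  obtain rfl : m = n + 2 * (Function.minimalPeriod f x * c) := by linarith
  have hpow : (f ^ ((n + 2 * (Function.minimalPeriod f x * c)) / 2)) x = (f ^ (n / 2)) x := by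
    rw [zpow_apply_eq_zpow_apply_iff_dvd, Int.add_mul_ediv_left _ _ two_ne_zero]
    simp
  simp [taggedOrbit, hpow, Int.even_add]

theorem exists_taggedOrbit_eq_inl (ha : a * a = 1) (hb : b * b = 1) (hx : a x = x) {y : H}
    (hxy : (a * b).SameCycle x y) (hy : a y = y) :
    ∃ m : ℤ, (Function.minimalPeriod (a * b) x : ℤ) ∣ m ∧ taggedOrbit (a * b) x m = .inl y := by
  obtain ⟨n, rfl⟩ := hxy
  rw [left_apply_zpow_mul ha hb hx, eq_comm, zpow_apply_eq_zpow_apply_iff_dvd] at hy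
  exact ⟨2 * n, by simpa [two_mul] using hy, by simp [taggedOrbit]⟩

theorem exists_taggedOrbit_eq_inr (ha : a * a = 1) (hb : b * b = 1) (hx : a x = x) {y : H}
    (hxy : (a * b).SameCycle x y) (hy : b y = y) :
    ∃ m : ℤ, (Function.minimalPeriod (a * b) x : ℤ) ∣ m ∧ taggedOrbit (a * b) x m = .inr y := by
  obtain ⟨n, rfl⟩ := hxy
  rw [right_apply_zpow_mul ha hb hx, eq_comm, zpow_apply_eq_zpow_apply_iff_dvd] at hy
  refine ⟨2 * n + 1, by convert hy using 1; ring, ?_⟩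
  simp [taggedOrbit, show (2 * n + 1) / 2 = n by omega]

theorem card_add_card_le_two_of_sameCycle (ha : a * a = 1) (hb : b * b = 1) (hx : a x = x)
    {A B : Finset H} (hA : ∀ y ∈ A, a y = y) (hB : ∀ y ∈ B, b y = y)
    (hxA : ∀ y ∈ A, (a * b).SameCycle x y) (hxB : ∀ y ∈ B, (a * b).SameCycle x y) :
    A.card + B.card ≤ 2 := by
  set N : ℤ := (Function.minimalPeriod (a * b) x : ℤ) with hN
  have htag : ∀ z ∈ A.disjSum B, ∃ m, N ∣ m ∧ taggedOrbit (a * b) x m = z := by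
    simp only [Finset.mem_disjSum]
    rintro _ (⟨y, hy, rfl⟩ | ⟨y, hy, rfl⟩)
    · exact exists_taggedOrbit_eq_inl ha hb hx (hxA y hy) (hA y hy)
    · exact exists_taggedOrbit_eq_inr ha hb hx (hxB y hy) (hB y hy)
  rw [← Finset.card_disjSum]
  refine Finset.card_le_card_of_forall_subsingleton (t := {0, 1})
    (fun z (r : ℤ) => ∃ q : ℤ, taggedOrbit (a * b) x (N * (r + 2 * q)) = z) (fun z hz => ?_)
    (fun r _ => ?_)
  · obtain ⟨_, ⟨c, rfl⟩, hz⟩ := htag z hz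
    refine ⟨c % 2, by simpa using Int.emod_two_eq_zero_or_one c, c / 2, ?_⟩
    rw [Int.emod_add_mul_ediv, hz]
  · rintro _ ⟨_, q, rfl⟩ _ ⟨_, q', rfl⟩
    exact taggedOrbit_eq_of_dvd ⟨q - q', by rw [← hN]; ring⟩

theorem exists_forall_not_sameCycle (ha : a * a = 1) (hb : b * b = 1) {A B : Finset H}
    (hA : ∀ y ∈ A, a y = y) (hB : ∀ y ∈ B, b y = y) (hcard : B.card < A.card) :
    ∃ x ∈ A, ∀ y ∈ B, ¬ (a * b).SameCycle x y := by
  classical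
  contrapose! hcard
  refine Finset.card_le_card_of_forall_subsingleton (a * b).SameCycle hcard
    fun y hy x₁ h₁ x₂ h₂ => ?_
  by_contra hne
  obtain ⟨h₁, hy₁⟩ := h₁
  obtain ⟨h₂, hy₂⟩ := h₂
  have := card_add_card_le_two_of_sameCycle ha hb (hA x₁ h₁) (A := {x₁, x₂}) (B := {y})
    (by simp [hA x₁ h₁, hA x₂ h₂]) (by simpa using hB y hy)
    (by simp [hy₁.trans hy₂.symm, Equiv.Perm.SameCycle.refl]) (by simpa using hy₁)
  rw [Finset.card_pair hne, Finset.card_singleton] at this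
  omega

end Involutions

/-! ### Exchanging two path systems -/

section Splice

variable {α : Type*} [DecidableEq α] (S : Set α) (A B : Finset α)

open scoped Classical in
/-- The finset that agrees with `B` on `S` and with `A` off `S`. -/
noncomputable def splice : Finset α := {x ∈ A | x ∉ S} ∪ {x ∈ B | x ∈ S}

variable {S A B} in
theorem mem_splice {x : α} : x ∈ splice S A B ↔ (x ∈ S ∧ x ∈ B) ∨ (x ∉ S ∧ x ∈ A) := by
  grind [splice]

open scoped Classical in
theorem splice_val :
    (splice S A B).val = A.val.filter (· ∉ S) + B.val.filter (· ∈ S) := by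
  rw [splice, ← Finset.disjUnion_eq_union]
  · rfl
  · grind [Finset.disjoint_left]

open scoped Classical in
theorem splice_val_add_filter :
    (splice S A B).val + A.val.filter (· ∈ S) = A.val + B.val.filter (· ∈ S) := by
  rw [splice_val, add_right_comm, add_comm (A.val.filter _), Multiset.filter_add_not]

open scoped Classical in
theorem card_splice_add_card_filter :
    (splice S A B).card + (A.filter (· ∈ S)).card = A.card + (B.filter (· ∈ S)).card := by
  have h := congrArg Multiset.card (splice_val_add_filter S A B)
  rw [Multiset.card_add, Multiset.card_add] at h
  exact h

theorem splice_val_add_splice_val :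
    (splice S A B).val + (splice S B A).val = A.val + B.val := by
  classical
  rw [splice_val S B A, add_comm (B.val.filter _), ← add_assoc, splice_val_add_filter, add_assoc,
    Multiset.filter_add_not]

end Splice

section PathSystems

variable {V : Type*} {R X Y : Finset (V × V)} {u v : V}

/-- `R` is the edge set of a vertex-disjoint union of directed paths and cycles: every vertex has at
most one outgoing and at most one incoming edge. -/
structure IsPathSystem (R : Finset (V × V)) : Prop where
  fst_injOn : Set.InjOn Prod.fst (R : Set (V × V))
  snd_injOn : Set.InjOn Prod.snd (R : Set (V × V))

theorem IsPathSystem.subset (hR : IsPathSystem R) (h : X ⊆ R) : IsPathSystem X :=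
  ⟨hR.fst_injOn.mono h, hR.snd_injOn.mono h⟩

variable [DecidableEq V]

/-- The vertices with an outgoing edge in `R`. -/
def dom (R : Finset (V × V)) : Finset V := R.image Prod.fst

/-- The vertices with an incoming edge in `R`. -/
def ran (R : Finset (V × V)) : Finset V := R.image Prod.snd

/-- The first vertices of the paths of `R`. -/
def starts (R : Finset (V × V)) : Finset V := dom R \ ran R

/-- The last vertices of the paths of `R`. -/
def ends (R : Finset (V × V)) : Finset V := ran R \ dom R

open scoped Classical in
/-- The number of paths of `R` that end in `S`. -/
noncomputable def endCount (R : Finset (V × V)) (S : Set V) : ℕ := {v ∈ ends R | v ∈ S}.card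

theorem mem_dom : u ∈ dom R ↔ ∃ v, (u, v) ∈ R := by simp [dom]

theorem mem_ran : v ∈ ran R ↔ ∃ u, (u, v) ∈ R := by simp [ran]

theorem IsPathSystem.card_starts (hR : IsPathSystem R) : (starts R).card = (ends R).card := by
  refine Finset.card_sdiff_comm ?_
  rw [dom, ran, Finset.card_image_of_injOn hR.fst_injOn, Finset.card_image_of_injOn hR.snd_injOn]

/-- Split every vertex into an out-half and an in-half. `Link R u v` says that `R` joins the
out-half of `u` to the in-half of `v`: an edge joins its two ends, and the two halves of a vertex
not on `R` are joined to each other. The halves left unjoined are the out-halves of ends and the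
in-halves of starts. -/
def Link (R : Finset (V × V)) (u v : V) : Prop :=
  (u, v) ∈ R ∨ (u = v ∧ u ∉ dom R ∧ v ∉ ran R)

theorem IsPathSystem.biUnique_link (hR : IsPathSystem R) : Relator.BiUnique (Link R) := by
  constructor
  · rintro u u' v (h | ⟨rfl, -, hr⟩) (h' | ⟨rfl, -, hr'⟩)
    · exact congrArg Prod.fst (hR.snd_injOn h h' rfl)
    · exact absurd (mem_ran.2 ⟨u, h⟩) hr'
    · exact absurd (mem_ran.2 ⟨u', h'⟩) hr
    · rfl
  · rintro u v v' (h | ⟨rfl, hd, -⟩) (h' | ⟨rfl, hd', -⟩)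
    · exact congrArg Prod.snd (hR.fst_injOn h h' rfl)
    · exact absurd (mem_dom.2 ⟨v, h⟩) hd'
    · exact absurd (mem_dom.2 ⟨v', h'⟩) hd
    · rfl

theorem not_link_of_mem_ends (hu : u ∈ ends R) : ¬ Link R u v := by
  grind [Link, ends, mem_dom]

theorem not_link_of_mem_starts (hv : v ∈ starts R) : ¬ Link R u v := by
  grind [Link, starts, mem_ran]

/-- A set of half-vertices, with out-halves `O` and in-halves `I`, that is a union of components of
the graph `Link R`. -/
def IsLinkClosed (R : Finset (V × V)) (O I : Set V) : Prop :=
  ∀ ⦃u v⦄, Link R u v → (u ∈ O ↔ v ∈ I)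

variable {O I : Set V}

theorem dom_splice : dom (splice (Prod.fst ⁻¹' O) X Y) = splice O (dom X) (dom Y) := by
  ext v
  simp [mem_dom, mem_splice, exists_or]

theorem ran_splice (hX : IsLinkClosed X O I) (hY : IsLinkClosed Y O I) :
    ran (splice (Prod.fst ⁻¹' O) X Y) = splice I (ran X) (ran Y) := by
  ext v
  simp only [mem_ran, mem_splice, Set.mem_preimage, exists_or, ← exists_and_left]
  refine or_congr (exists_congr fun u => ?_) (exists_congr fun u => ?_)
  · exact and_congr_left fun h => hY (.inl h)
  · exact and_congr_left fun h => not_congr (hX (.inl h))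

theorem injOn_splice {α β : Type*} [DecidableEq α] {f : α → β} {A B : Finset α} {S : Set α}
    {T : Set β} (hA : Set.InjOn f A) (hB : Set.InjOn f B) (hAT : ∀ x ∈ A, x ∈ S ↔ f x ∈ T)
    (hBT : ∀ x ∈ B, x ∈ S ↔ f x ∈ T) : Set.InjOn f (splice S A B : Finset α) := by
  intro x hx y hy hxy
  rcases mem_splice.1 hx with ⟨hxS, hx⟩ | ⟨hxS, hx⟩ <;>
    rcases mem_splice.1 hy with ⟨hyS, hy⟩ | ⟨hyS, hy⟩
  · exact hB hx hy hxy
  · exact absurd ((hAT y hy).2 (hxy ▸ (hBT x hx).1 hxS)) hyS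
  · exact absurd ((hAT x hx).2 (hxy ▸ (hBT y hy).1 hyS)) hxS
  · exact hA hx hy hxy

theorem IsPathSystem.splice (hX : IsPathSystem X) (hY : IsPathSystem Y) (hCX : IsLinkClosed X O I)
    (hCY : IsLinkClosed Y O I) : IsPathSystem (splice (Prod.fst ⁻¹' O) X Y) where
  fst_injOn := injOn_splice hX.fst_injOn hY.fst_injOn (fun _ _ => Iff.rfl) fun _ _ => Iff.rfl
  snd_injOn := injOn_splice hX.snd_injOn hY.snd_injOn (fun _ he => hCX (.inl he))
    fun _ he => hCY (.inl he)

theorem ends_splice (hCX : IsLinkClosed X O I) (hCY : IsLinkClosed Y O I)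
    (hXY : Disjoint (starts X) (ends Y)) (hYX : Disjoint (starts Y) (ends X)) :
    ends (splice (Prod.fst ⁻¹' O) X Y) = splice O (ends X) (ends Y) := by
  ext v
  -- The two halves of `v` can lie on different sides only if `v` is on both `X` and `Y`, and the
  -- splice then misses `v` only if `v` is a start of one of them and an end of the other.
  have hX := @hCX v v
  have hY := @hCY v v
  rw [Finset.disjoint_left] at hXY hYX
  have := @hXY v
  have := @hYX v
  simp only [ends, starts, Link, Finset.mem_sdiff, dom_splice, ran_splice hCX hCY, mem_splice] at *
  grind

theorem starts_splice (hCX : IsLinkClosed X O I) (hCY : IsLinkClosed Y O I)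
    (hXY : Disjoint (starts X) (ends Y)) (hYX : Disjoint (starts Y) (ends X)) :
    starts (splice (Prod.fst ⁻¹' O) X Y) = splice I (starts X) (starts Y) := by
  ext v
  have hX := @hCX v v
  have hY := @hCY v v
  rw [Finset.disjoint_left] at hXY hYX
  have := @hXY v
  have := @hYX v
  simp only [ends, starts, Link, Finset.mem_sdiff, dom_splice, ran_splice hCX hCY, mem_splice] at *
  grind

end PathSystems

section Component

variable {α β : Type*}

theorem exists_involution_of_biUnique {r : α → β → Prop} (hr : Relator.BiUnique r) :
    ∃ a : Equiv.Perm (α ⊕ β), a * a = 1 ∧ (∀ u v, r u v → a (.inl u) = .inr v) ∧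
      (∀ u, (∀ v, ¬ r u v) → a (.inl u) = .inl u) ∧
      ∀ v, (∀ u, ¬ r u v) → a (.inr v) = .inr v := by
  classical
  let f : α ⊕ β → α ⊕ β := Sum.elim
    (fun u => if h : ∃ v, r u v then .inr h.choose else .inl u)
    (fun v => if h : ∃ u, r u v then .inl h.choose else .inr v)
  have hinl : ∀ {u v}, r u v → f (.inl u) = .inr v := fun {u v} h => by
    have hex : ∃ v, r u v := ⟨v, h⟩
    simp [f, hex, hr.2 hex.choose_spec h]
  have hinr : ∀ {u v}, r u v → f (.inr v) = .inl u := fun {u v} h => by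
    have hex : ∃ u, r u v := ⟨u, h⟩
    simp [f, hex, hr.1 hex.choose_spec h]
  have hinl' : ∀ u, (∀ v, ¬ r u v) → f (.inl u) = .inl u := fun u h => by simp [f, h]
  have hinr' : ∀ v, (∀ u, ¬ r u v) → f (.inr v) = .inr v := fun v h => by simp [f, h]
  have hf : Function.Involutive f := by
    rintro (u | v)
    · by_cases h : ∃ v, r u v
      · obtain ⟨v, h⟩ := h
        rw [hinl h, hinr h]
      · rw [hinl' u (not_exists.1 h), hinl' u (not_exists.1 h)]
    · by_cases h : ∃ u, r u v
      · obtain ⟨u, h⟩ := h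
        rw [hinr h, hinl h]
      · rw [hinr' v (not_exists.1 h), hinr' v (not_exists.1 h)]
  exact ⟨hf.toPerm, Equiv.ext hf, fun u v => hinl, hinl', hinr'⟩

variable {V : Type*} [DecidableEq V] {X Y : Finset (V × V)}

open scoped Classical in
theorem IsPathSystem.exists_isLinkClosed (hX : IsPathSystem X) (hY : IsPathSystem Y) (S : Set V)
    (hcard : endCount Y S < endCount X S) :
    ∃ O I : Set V, IsLinkClosed X O I ∧ IsLinkClosed Y O I ∧
      (∃ x ∈ ends X, x ∈ S ∧ x ∈ O) ∧ (∀ y ∈ ends Y, y ∈ S → y ∉ O) ∧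
      ((ends X).filter (· ∈ O)).card + ((starts X).filter (· ∈ I)).card +
        (((ends Y).filter (· ∈ O)).card + ((starts Y).filter (· ∈ I)).card) ≤ 2 := by
  obtain ⟨a, ha, hXa, haends, hastarts⟩ := exists_involution_of_biUnique hX.biUnique_link
  obtain ⟨b, hb, hYb, hbends, hbstarts⟩ := exists_involution_of_biUnique hY.biUnique_link
  replace haends := fun u hu => haends u fun v => not_link_of_mem_ends hu
  replace hbends := fun u hu => hbends u fun v => not_link_of_mem_ends hu
  replace hastarts := fun v hv => hastarts v fun u => not_link_of_mem_starts hv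
  replace hbstarts := fun v hv => hbstarts v fun u => not_link_of_mem_starts hv
  obtain ⟨_, hx, hxY⟩ := exists_forall_not_sameCycle ha hb
    (A := ((ends X).filter (· ∈ S)).map .inl) (B := ((ends Y).filter (· ∈ S)).map .inl)
    (Finset.forall_mem_map.2 fun u hu => haends u (Finset.mem_filter.1 hu).1)
    (Finset.forall_mem_map.2 fun u hu => hbends u (Finset.mem_filter.1 hu).1)
    (by rwa [Finset.card_map, Finset.card_map])
  simp only [Finset.mem_map, Finset.mem_filter] at hx hxY
  obtain ⟨x, ⟨hxX, hxS⟩, rfl⟩ := hx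
  have hax := haends x hxX
  refine ⟨{v | (a * b).SameCycle (.inl x) (.inl v)}, {v | (a * b).SameCycle (.inl x) (.inr v)},
    fun u v h => ?_, fun u v h => ?_, ⟨x, hxX, hxS, .rfl⟩,
    fun y hy hyS => hxY _ ⟨y, ⟨hy, hyS⟩, rfl⟩, ?_⟩
  · rw [Set.mem_ofPred_eq, Set.mem_ofPred_eq, ← hXa u v h, sameCycle_apply_left ha hb hax]
  · rw [Set.mem_ofPred_eq, Set.mem_ofPred_eq, ← hYb u v h, sameCycle_apply_right ha hb hax]
  · rw [← Finset.card_disjSum, ← Finset.card_disjSum]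
    apply card_add_card_le_two_of_sameCycle ha hb hax <;>
      simp +contextual [haends, hbends, hastarts, hbstarts]

end Component

section Linkings

variable {V : Type*} [DecidableEq V] {E X Y : Finset (V × V)} {A T S : Set V}

/-- `R` is the edge set of a vertex-disjoint union of paths from `A` to `T` in the graph `E`,
possibly together with some cycles of `E`. -/
structure IsLinking (E : Finset (V × V)) (A T : Set V) (R : Finset (V × V)) : Prop where
  subset : R ⊆ E
  isPathSystem : IsPathSystem R
  starts_subset : ∀ v ∈ starts R, v ∈ A
  ends_subset : ∀ v ∈ ends R, v ∈ T

theorem IsLinking.disjoint_starts_ends (hAT : Disjoint A T) (hX : IsLinking E A T X)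
    (hY : IsLinking E A T Y) : Disjoint (starts X) (ends Y) :=
  Finset.disjoint_left.2 fun _ hs he =>
    Set.disjoint_left.1 hAT (hX.starts_subset _ hs) (hY.ends_subset _ he)

theorem IsLinking.splice (hAT : Disjoint A T) (hX : IsLinking E A T X) (hY : IsLinking E A T Y)
    {O I : Set V} (hCX : IsLinkClosed X O I) (hCY : IsLinkClosed Y O I) :
    IsLinking E A T (splice (Prod.fst ⁻¹' O) X Y) where
  subset _ he := (mem_splice.1 he).elim (fun h => hY.subset h.2) fun h => hX.subset h.2
  isPathSystem := hX.isPathSystem.splice hY.isPathSystem hCX hCY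
  starts_subset v hv := by
    rw [starts_splice hCX hCY (hX.disjoint_starts_ends hAT hY) (hY.disjoint_starts_ends hAT hX)]
      at hv
    exact (mem_splice.1 hv).elim (fun h => hY.starts_subset v h.2) fun h => hX.starts_subset v h.2
  ends_subset v hv := by
    rw [ends_splice hCX hCY (hX.disjoint_starts_ends hAT hY) (hY.disjoint_starts_ends hAT hX)]
      at hv
    exact (mem_splice.1 hv).elim (fun h => hY.ends_subset v h.2) fun h => hX.ends_subset v h.2

open scoped Classical in
theorem IsLinking.card_filter_balance (hAT : Disjoint A T) (hX : IsLinking E A T X)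
    (hY : IsLinking E A T Y) {O I : Set V} (hCX : IsLinkClosed X O I) (hCY : IsLinkClosed Y O I) :
    ((ends X).filter (· ∈ O)).card + ((starts Y).filter (· ∈ I)).card =
      ((ends Y).filter (· ∈ O)).card + ((starts X).filter (· ∈ I)).card := by
  have hZ := (hX.splice hAT hY hCX hCY).isPathSystem.card_starts
  have hXc := hX.isPathSystem.card_starts
  have hXY := hX.disjoint_starts_ends hAT hY
  have hYX := hY.disjoint_starts_ends hAT hX
  rw [starts_splice hCX hCY hXY hYX, ends_splice hCX hCY hXY hYX] at hZ
  have hs := card_splice_add_card_filter I (starts X) (starts Y)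
  have he := card_splice_add_card_filter O (ends X) (ends Y)
  omega

theorem IsLinking.exchange (hAT : Disjoint A T) (hX : IsLinking E A T X) (hY : IsLinking E A T Y)
    (hS : endCount Y S < endCount X S) :
    ∃ X' Y' : Finset (V × V), IsLinking E A T X' ∧ IsLinking E A T Y' ∧
      X'.val + Y'.val = X.val + Y.val ∧
      ∃ x ∈ ends X, x ∈ S ∧ ∃ q : Finset V, (∀ y ∈ q, y ∉ S) ∧ q.card ≤ 1 ∧
        (ends X').val + {x} = (ends X).val + q.val ∧
        (ends Y).val + {x} = (ends Y').val + q.val := by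
  classical
  obtain ⟨O, I, hCX, hCY, ⟨x, hx, hxS, hxO⟩, hYO, htwo⟩ :=
    hX.isPathSystem.exists_isLinkClosed hY.isPathSystem S hS
  have hXY := hX.disjoint_starts_ends hAT hY
  have hYX := hY.disjoint_starts_ends hAT hX
  have hbal := hX.card_filter_balance hAT hY hCX hCY
  have hx_mem : x ∈ (ends X).filter (· ∈ O) := Finset.mem_filter.2 ⟨hx, hxO⟩
  have hpos := Finset.card_pos.2 ⟨x, hx_mem⟩
  have hone : ((ends X).filter (· ∈ O)).card = 1 := by omega
  have hval : (ends X).val.filter (· ∈ O) = {x} := by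
    rw [← Finset.filter_val, ← Finset.singleton_val, Finset.val_inj]
    exact (Finset.eq_of_subset_of_card_le (by simpa using hx_mem) (by simp [hone])).symm
  refine ⟨_, _, hX.splice hAT hY hCX hCY, hY.splice hAT hX hCY hCX,
    splice_val_add_splice_val _ X Y, x, hx, hxS, (ends Y).filter (· ∈ O),
    fun y hy hyS => hYO y (Finset.mem_filter.1 hy).1 hyS (Finset.mem_filter.1 hy).2, by omega,
    ?_, ?_⟩
  · rw [ends_splice hCX hCY hXY hYX, ← hval, splice_val_add_filter, Finset.filter_val]
  · rw [ends_splice hCY hCX hYX hXY, ← hval, Finset.filter_val, splice_val_add_filter]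

end Linkings

/-! ### Sets of weights -/

theorem sum_add_sum_of_val_add_val {α M : Type*} [AddCommMonoid M] {X Y X' Y' : Finset α}
    (h : X'.val + Y'.val = X.val + Y.val) (ε : α → M) :
    ∑ e ∈ X', ε e + ∑ e ∈ Y', ε e = ∑ e ∈ X, ε e + ∑ e ∈ Y, ε e := by
  simp only [Finset.sum_eq_multiset_sum, ← Multiset.sum_add, ← Multiset.map_add, h]

section LinkingWeights

open scoped Pointwise

variable {V M : Type*} [DecidableEq V] [AddCommMonoid M] {E X Y : Finset (V × V)}
  {A B C : Set V} {ε : V × V → M} {p q : ℕ}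

open scoped Classical in
theorem endCount_add_ite {x : V} {r : Finset V} (h : (ends X).val + {x} = (ends Y).val + r.val)
    (S : Set V) :
    endCount X S + (if x ∈ S then 1 else 0) = endCount Y S + (r.filter (· ∈ S)).card := by
  have h' := congrArg (Multiset.countP (· ∈ S)) h
  rw [← Multiset.cons_zero, Multiset.countP_add, Multiset.countP_add, Multiset.countP_cons,
    Multiset.countP_zero, zero_add] at h'
  simp only [Multiset.countP_eq_card_filter] at h'
  exact h'

theorem IsLinking.endCount_add_endCount (hX : IsLinking E A (B ∪ C) X) (hBC : Disjoint B C) :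
    endCount X B + endCount X C = endCount X Set.univ := by
  classical
  have hC : (ends X).filter (· ∈ C) = (ends X).filter (· ∉ B) :=
    Finset.filter_congr fun v hv => ⟨fun h => Set.disjoint_right.1 hBC h,
      fun h => (hX.ends_subset v hv).resolve_left h⟩
  simp only [endCount, Set.mem_univ, Finset.filter_true, hC, Finset.card_filter_add_card_filter_not]

/-- The weights of the vertex-disjoint unions of paths in `E` (and possibly some cycles) that
start in `A` and of which `p` end in `B` and `q` end in `C`. -/
def linkingWeights (E : Finset (V × V)) (A B C : Set V) (ε : V × V → M) (p q : ℕ) : Set M :=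
  {w | ∃ R, IsLinking E A (B ∪ C) R ∧ endCount R B = p ∧ endCount R C = q ∧ w = ∑ e ∈ R, ε e}

theorem linkingWeights_comm : linkingWeights E A B C ε p q = linkingWeights E A C B ε q p := by
  simp only [linkingWeights, Set.union_comm B C]
  exact congrArg _ (funext fun w => propext (exists_congr fun R => and_congr_right fun _ =>
    and_left_comm))

theorem linkingWeights_add_subset_of_left (hA : Disjoint A (B ∪ C)) (hBC : Disjoint B C) :
    linkingWeights E A B C ε (p + 2) q + linkingWeights E A B C ε p (q + 1) ⊆
      linkingWeights E A B C ε (p + 1) (q + 1) + linkingWeights E A B C ε (p + 1) q := by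
  classical
  rintro _ ⟨_, ⟨X, hX, hXB, hXC, rfl⟩, _, ⟨Y, hY, hYB, hYC, rfl⟩, rfl⟩
  obtain ⟨X', Y', hX', hY', hval, x, -, hxB, r, hrB, hrcard, hXr, hYr⟩ :=
    hX.exchange hA hY (S := B) (by omega)
  have hxC := Set.disjoint_left.1 hBC hxB
  have hX'B := endCount_add_ite hXr B
  have hX'C := endCount_add_ite hXr C
  have hY'B := endCount_add_ite hYr B
  have hY'C := endCount_add_ite hYr C
  have hrC : (r.filter (· ∈ C)).card ≤ 1 := (Finset.card_filter_le _ _).trans hrcard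
  simp only [hxB, hxC, if_true, if_false, Finset.filter_false_of_mem hrB, Finset.card_empty]
    at hX'B hX'C hY'B hY'C
  have hsum := sum_add_sum_of_val_add_val hval ε
  obtain hrC | hrC := Nat.le_one_iff_eq_zero_or_eq_one.1 hrC
  · exact ⟨_, ⟨Y', hY', by omega, by omega, rfl⟩, _, ⟨X', hX', by omega, by omega, rfl⟩,
      (add_comm _ _).trans hsum⟩
  · exact ⟨_, ⟨X', hX', by omega, by omega, rfl⟩, _, ⟨Y', hY', by omega, by omega, rfl⟩, hsum⟩

theorem linkingWeights_add_subset_of_right (hA : Disjoint A (B ∪ C)) (hBC : Disjoint B C) :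
    linkingWeights E A B C ε p (q + 2) + linkingWeights E A B C ε (p + 1) q ⊆
      linkingWeights E A B C ε (p + 1) (q + 1) + linkingWeights E A B C ε p (q + 1) := by
  simp only [linkingWeights_comm (B := B)]
  exact linkingWeights_add_subset_of_left (Set.union_comm B C ▸ hA) hBC.symm

theorem linkingWeights_add_subset_of_both (hA : Disjoint A (B ∪ C)) (hBC : Disjoint B C) :
    linkingWeights E A B C ε (p + 1) (q + 1) + linkingWeights E A B C ε p q ⊆
      linkingWeights E A B C ε p (q + 1) + linkingWeights E A B C ε (p + 1) q := by
  classical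
  rintro _ ⟨_, ⟨X, hX, hXB, hXC, rfl⟩, _, ⟨Y, hY, hYB, hYC, rfl⟩, rfl⟩
  have hXcard := hX.endCount_add_endCount hBC
  have hYcard := hY.endCount_add_endCount hBC
  obtain ⟨X', Y', hX', hY', hval, x, hx, -, r, hr, -, hXr, hYr⟩ :=
    hX.exchange hA hY (S := Set.univ) (by omega)
  obtain rfl : r = ∅ := Finset.eq_empty_of_forall_notMem fun y hy => hr y hy trivial
  have hX'B := endCount_add_ite hXr B
  have hX'C := endCount_add_ite hXr C
  have hY'B := endCount_add_ite hYr B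
  have hY'C := endCount_add_ite hYr C
  have hsum := sum_add_sum_of_val_add_val hval ε
  obtain ⟨hxB, hxC⟩ | ⟨hxB, hxC⟩ : (x ∈ B ∧ x ∉ C) ∨ (x ∉ B ∧ x ∈ C) :=
    (hX.ends_subset x hx).imp (fun h => ⟨h, Set.disjoint_left.1 hBC h⟩)
      fun h => ⟨Set.disjoint_right.1 hBC h, h⟩
  all_goals simp only [hxB, hxC, if_true, if_false, Finset.filter_empty, Finset.card_empty]
    at hX'B hX'C hY'B hY'C
  · exact ⟨_, ⟨X', hX', by omega, by omega, rfl⟩, _, ⟨Y', hY', by omega, by omega, rfl⟩, hsum⟩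
  · exact ⟨_, ⟨Y', hY', by omega, by omega, rfl⟩, _, ⟨X', hX', by omega, by omega, rfl⟩,
      (add_comm _ _).trans hsum⟩

end LinkingWeights

open scoped Pointwise in
theorem add_le_add_of_isGreatest {M : Type*} [AddCommMonoid M] [PartialOrder M]
    [IsOrderedAddMonoid M] {A B C D : Set M} {a b c d : M} (ha : IsGreatest A a)
    (hb : IsGreatest B b) (hc : IsGreatest C c) (hd : IsGreatest D d) (h : A + B ⊆ C + D) :
    a + b ≤ c + d :=
  add_mem_upperBounds_add hc.2 hd.2 (h (Set.add_mem_add ha.1 hb.1))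

/-! ### Edge sets and families of paths -/

section Families

variable {V ι : Type*} {F : ι → List V} {u v : V} {i i' : ℕ} {j j' : ι}

/-- The lists `F j` are vertex-disjoint simple paths with at least one edge each. -/
structure IsDisjointFamily (F : ι → List V) : Prop where
  nodup : ∀ j, (F j).Nodup
  disjoint : ∀ j j', j ≠ j' → ∀ v ∈ F j, v ∉ F j'
  one_lt_length : ∀ j, 1 < (F j).length

theorem IsDisjointFamily.getElem?_inj (hF : IsDisjointFamily F) (h : (F j)[i]? = some v)
    (h' : (F j')[i']? = some v) : j = j' ∧ i = i' := by
  obtain rfl : j = j' := by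
    by_contra hne
    exact hF.disjoint j j' hne v (List.mem_of_getElem? h) (List.mem_of_getElem? h')
  have hi := (List.getElem?_eq_some_iff.1 h).1
  exact ⟨rfl, (List.getElem?_inj hi (hF.nodup j)).1 (h.trans h'.symm)⟩

variable [DecidableEq V] [Fintype ι]

/-- The edges traversed by a family of paths, each recorded as the list of its vertices. -/
def edgeSet (F : ι → List V) : Finset (V × V) :=
  Finset.univ.biUnion fun j => ((F j).zip (F j).tail).toFinset

theorem mem_edgeSet :
    (u, v) ∈ edgeSet F ↔ ∃ j i, (F j)[i]? = some u ∧ (F j)[i + 1]? = some v := by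
  simp [edgeSet, List.mem_iff_getElem?, List.getElem?_zip_eq_some]

theorem mem_dom_edgeSet :
    u ∈ dom (edgeSet F) ↔ ∃ j i, (F j)[i]? = some u ∧ i + 1 < (F j).length := by
  simp only [mem_dom, mem_edgeSet]
  refine ⟨fun ⟨v, j, i, hu, hv⟩ => ⟨j, i, hu, (List.getElem?_eq_some_iff.1 hv).1⟩,
    fun ⟨j, i, hu, hi⟩ => ⟨(F j)[i + 1], j, i, hu, List.getElem?_eq_getElem hi⟩⟩

theorem mem_ran_edgeSet : v ∈ ran (edgeSet F) ↔ ∃ j i, (F j)[i + 1]? = some v := by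
  simp only [mem_ran, mem_edgeSet]
  refine ⟨fun ⟨_, j, i, _, h⟩ => ⟨j, i, h⟩, fun ⟨j, i, h⟩ => ?_⟩
  have hi : i + 1 < (F j).length := (List.getElem?_eq_some_iff.1 h).1
  exact ⟨(F j)[i], j, i, List.getElem?_eq_getElem (by omega), h⟩

theorem IsDisjointFamily.isPathSystem (hF : IsDisjointFamily F) : IsPathSystem (edgeSet F) := by
  constructor
  · rintro ⟨u, v⟩ h ⟨u', v'⟩ h' (rfl : u = u')
    obtain ⟨j, i, hu, hv⟩ := mem_edgeSet.1 h
    obtain ⟨j', i', hu', hv'⟩ := mem_edgeSet.1 h'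
    obtain ⟨rfl, rfl⟩ := hF.getElem?_inj hu hu'
    rw [Option.some.inj (hv.symm.trans hv')]
  · rintro ⟨u, v⟩ h ⟨u', v'⟩ h' (rfl : v = v')
    obtain ⟨j, i, hu, hv⟩ := mem_edgeSet.1 h
    obtain ⟨j', i', hu', hv'⟩ := mem_edgeSet.1 h'
    obtain ⟨rfl, hi⟩ := hF.getElem?_inj hv hv'
    obtain rfl := Nat.succ.inj hi
    rw [Option.some.inj (hu.symm.trans hu')]

theorem IsDisjointFamily.mem_starts (hF : IsDisjointFamily F) :
    v ∈ starts (edgeSet F) ↔ ∃ j, (F j).head? = some v := by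
  simp only [starts, Finset.mem_sdiff, mem_dom_edgeSet, mem_ran_edgeSet, List.head?_eq_getElem?]
  constructor
  · rintro ⟨⟨j, _ | i, hv, -⟩, hran⟩
    · exact ⟨j, hv⟩
    · exact absurd ⟨j, i, hv⟩ hran
  · rintro ⟨j, hv⟩
    refine ⟨⟨j, 0, hv, hF.one_lt_length j⟩, ?_⟩
    rintro ⟨j', i, hv'⟩
    exact absurd (hF.getElem?_inj hv hv').2 (by omega)

theorem IsDisjointFamily.mem_ends (hF : IsDisjointFamily F) :
    v ∈ ends (edgeSet F) ↔ ∃ j, (F j).getLast? = some v := by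
  simp only [ends, Finset.mem_sdiff, mem_dom_edgeSet, mem_ran_edgeSet, List.getLast?_eq_getElem?]
  constructor
  · rintro ⟨⟨j, i, hv⟩, hdom⟩
    have hi : i + 1 < (F j).length := (List.getElem?_eq_some_iff.1 hv).1
    obtain hlast | hlt : i + 1 = (F j).length - 1 ∨ i + 1 + 1 < (F j).length := by omega
    · exact ⟨j, hlast ▸ hv⟩
    · exact absurd ⟨j, i + 1, hv, hlt⟩ hdom
  · rintro ⟨j, hv⟩
    have hlen := hF.one_lt_length j
    have hlast : (F j).length - 2 + 1 = (F j).length - 1 := by omega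
    refine ⟨⟨j, (F j).length - 2, hlast ▸ hv⟩, ?_⟩
    rintro ⟨j', i, hv', hi⟩
    obtain ⟨rfl, rfl⟩ := hF.getElem?_inj hv hv'
    omega

theorem IsDisjointFamily.card_ends (hF : IsDisjointFamily F) :
    (ends (edgeSet F)).card = Fintype.card ι := by
  have hne : ∀ j, F j ≠ [] := fun j =>
    List.ne_nil_of_length_pos (Nat.zero_lt_of_lt (hF.one_lt_length j))
  have himage : ends (edgeSet F) = Finset.univ.image fun j => (F j).getLast (hne j) := by
    ext v
    simp [hF.mem_ends, List.getLast?_eq_getLast_of_ne_nil, hne]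
  rw [himage, Finset.card_image_of_injective, Finset.card_univ]
  intro j j' (h : (F j).getLast (hne j) = (F j').getLast (hne j'))
  by_contra hjj
  have hmem := List.getLast_mem (hne j')
  rw [← h] at hmem
  exact hF.disjoint j j' hjj _ (List.getLast_mem (hne j)) hmem

theorem IsDisjointFamily.sum_edgeSet {M : Type*} [AddCommMonoid M] (hF : IsDisjointFamily F)
    (ε : V × V → M) : ∑ e ∈ edgeSet F, ε e = ∑ j, (((F j).zip (F j).tail).map ε).sum := by
  rw [edgeSet, Finset.sum_biUnion]
  · refine Finset.sum_congr rfl fun j _ => List.sum_toFinset ε (List.Nodup.of_map Prod.snd ?_)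
    rw [List.map_snd_zip (by simp)]
    exact (hF.nodup j).tail
  · intro j _ j' _ hne
    refine Finset.disjoint_left.2 fun e h h' => ?_
    exact hF.disjoint j j' hne e.1 (List.of_mem_zip (List.mem_toFinset.1 h)).1
      (List.of_mem_zip (List.mem_toFinset.1 h')).1

end Families

section Decomposition

open Relation

theorem exists_reflTransGen_forall_not {V α : Type*} [LinearOrder α] {r : V → V → Prop}
    (s : Finset V) (hs : ∀ u v, r u v → u ∈ s) {h : V → α} (hh : ∀ u v, r u v → h u < h v) (v : V) :
    ∃ u, ReflTransGen r u v ∧ ∀ w, ¬ r w u := by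
  classical
  obtain ⟨u, hu, hmin⟩ := ({u ∈ insert v s | ReflTransGen r u v} : Finset V).exists_min_image h
    ⟨v, Finset.mem_filter.2 ⟨Finset.mem_insert_self _ _, .refl⟩⟩
  have huv := (Finset.mem_filter.1 hu).2
  refine ⟨u, huv, fun w hwu => (hh w u hwu).not_ge (hmin w ?_)⟩
  exact Finset.mem_filter.2 ⟨Finset.mem_insert_of_mem (hs w u hwu), .head hwu huv⟩

variable {V α : Type*} [LinearOrder α] {R : Finset (V × V)} {h : V → α}

theorem nodup_of_isChain (hh : ∀ e ∈ R, h e.1 < h e.2) {l : List V}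
    (hl : l.IsChain fun u v => (u, v) ∈ R) : l.Nodup := by
  have hlt : (l.map h).IsChain (· < ·) :=
    (List.isChain_map h).2 (hl.imp fun u v huv => hh (u, v) huv)
  exact .of_map h ((List.isChain_iff_pairwise.1 hlt).imp ne_of_lt)

theorem reflTransGen_getLast_of_mem {r : V → V → Prop} {l : List V} (hl : l ≠ [])
    (hchain : l.IsChain r) {v : V} (hv : v ∈ l) : ReflTransGen r v (l.getLast hl) :=
  hchain.backwards_induction (ReflTransGen r · (l.getLast hl)) l (fun _ _ => .head)
    (fun _ => .refl) v hv

variable [DecidableEq V]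

theorem exists_isChain_to_end (hh : ∀ e ∈ R, h e.1 < h e.2) (w : V) :
    ∃ l : List V, ∃ hl : l ≠ [], l.IsChain (fun u v => (u, v) ∈ R) ∧ l.head hl ∉ ran R ∧
      l.getLast hl = w := by
  obtain ⟨s, hsw, hs⟩ := exists_reflTransGen_forall_not (dom R)
    (fun u v huv => mem_dom.2 ⟨v, huv⟩) (fun u v huv => hh (u, v) huv) w
  obtain ⟨l, hl, hchain, hhead, hlast⟩ := List.exists_isChain_ne_nil_of_relationReflTransGen hsw
  exact ⟨l, hl, hchain, fun hmem => (mem_ran.1 hmem).elim (hhead ▸ hs), hlast⟩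

theorem exists_mem_ends_reflTransGen (hh : ∀ e ∈ R, h e.1 < h e.2) {v : V} (hv : v ∈ ran R) :
    ∃ w ∈ ends R, ReflTransGen (fun u v => (u, v) ∈ R) v w := by
  obtain ⟨w, hvw, hw⟩ := exists_reflTransGen_forall_not (r := fun u v => (v, u) ∈ R) (ran R)
    (fun u v huv => mem_ran.2 ⟨v, huv⟩) (h := OrderDual.toDual ∘ h) (fun u v huv => hh (v, u) huv) v
  have hvw' : ReflTransGen (fun u v => (u, v) ∈ R) v w := reflTransGen_swap.1 hvw
  refine ⟨w, Finset.mem_sdiff.2 ⟨?_, fun hmem => (mem_dom.1 hmem).elim hw⟩, hvw'⟩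
  obtain rfl | ⟨u, -, huw⟩ := ReflTransGen.cases_tail hvw'
  · exact hv
  · exact mem_ran.2 ⟨u, huw⟩

theorem IsPathSystem.exists_getElem?_of_mem (hR : IsPathSystem R) {l : List V} (hl : l ≠ [])
    (hchain : l.IsChain fun u v => (u, v) ∈ R) (hhead : l.head hl ∉ ran R) {u v : V}
    (huv : (u, v) ∈ R) (hv : v ∈ l) : ∃ i, l[i]? = some u ∧ l[i + 1]? = some v := by
  obtain ⟨_ | i, hi, rfl⟩ := List.mem_iff_getElem.1 hv
  · exact absurd (mem_ran.2 ⟨u, huv⟩) (List.head_eq_getElem hl ▸ hhead)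
  · refine ⟨i, ?_, List.getElem?_eq_getElem hi⟩
    rw [List.getElem?_eq_getElem (by omega)]
    exact congrArg (some ∘ Prod.fst) (hR.snd_injOn (List.isChain_iff_getElem.1 hchain i hi) huv rfl)

theorem IsPathSystem.mem_of_reflTransGen_getLast (hR : IsPathSystem R) {l : List V} (hl : l ≠ [])
    (hchain : l.IsChain fun u v => (u, v) ∈ R) (hhead : l.head hl ∉ ran R) {v : V}
    (hv : ReflTransGen (fun u v => (u, v) ∈ R) v (l.getLast hl)) : v ∈ l := by
  refine hv.head_induction_on (List.getLast_mem hl) fun huv _ hmem => ?_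
  obtain ⟨i, hi, -⟩ := hR.exists_getElem?_of_mem hl hchain hhead huv hmem
  exact List.mem_of_getElem? hi

theorem IsPathSystem.eq_of_reflTransGen_ends (hR : IsPathSystem R) {v w w' : V}
    (hw : w ∈ ends R) (hw' : w' ∈ ends R) (h : ReflTransGen (fun u v => (u, v) ∈ R) v w)
    (h' : ReflTransGen (fun u v => (u, v) ∈ R) v w') : w = w' := by
  have hmax : ∀ w ∈ ends R, ∀ x, ReflTransGen (fun u v => (u, v) ∈ R) w x → w = x :=
    fun w hw x hwx => (ReflTransGen.cases_head hwx).resolve_right fun ⟨y, hy, _⟩ =>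
      (Finset.mem_sdiff.1 hw).2 (mem_dom.2 ⟨y, hy⟩)
  have huniq : Relator.RightUnique fun u v => (u, v) ∈ R := fun u v v' hv hv' =>
    congrArg Prod.snd (hR.fst_injOn hv hv' rfl)
  exact (ReflTransGen.total_of_right_unique huniq h h').elim (hmax w hw w')
    fun h => (hmax w' hw' w h).symm

theorem IsPathSystem.exists_isDisjointFamily (hR : IsPathSystem R) (hh : ∀ e ∈ R, h e.1 < h e.2)
    {ι : Type*} [Fintype ι] (hι : Fintype.card ι = (ends R).card) :
    ∃ F : ι → List V, IsDisjointFamily F ∧ edgeSet F = R := by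
  have σ : ι ≃ ends R := Fintype.equivOfCardEq (hι.trans (Fintype.card_coe _).symm)
  choose F hne hchain hhead hlast using fun j => exists_isChain_to_end hh (σ j : V)
  have hfamily : IsDisjointFamily F := by
    refine ⟨fun j => nodup_of_isChain hh (hchain j), fun j j' hjj v hv hv' => hjj ?_, fun j => ?_⟩
    · have hvj := reflTransGen_getLast_of_mem (hne j) (hchain j) hv
      have hvj' := reflTransGen_getLast_of_mem (hne j') (hchain j') hv'
      rw [hlast] at hvj hvj'
      exact σ.injective (Subtype.ext (hR.eq_of_reflTransGen_ends (σ j).2 (σ j').2 hvj hvj'))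
    · by_contra hlen
      have hhead_eq : (F j).head (hne j) = σ j := by
        have := List.length_pos_iff.2 (hne j)
        rw [← hlast j, List.head_eq_getElem, List.getLast_eq_getElem]
        congr 1
        omega
      exact hhead j (hhead_eq ▸ (Finset.mem_sdiff.1 (σ j).2).1)
  refine ⟨F, hfamily, Finset.ext fun ⟨u, v⟩ => mem_edgeSet.trans ⟨?_, fun huv => ?_⟩⟩
  · rintro ⟨j, i, hu, hv⟩
    obtain ⟨hi, rfl⟩ := List.getElem?_eq_some_iff.1 hv
    obtain ⟨_, rfl⟩ := List.getElem?_eq_some_iff.1 hu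
    exact List.isChain_iff_getElem.1 (hchain j) i hi
  · obtain ⟨w, hw, hvw⟩ := exists_mem_ends_reflTransGen hh (mem_ran.2 ⟨u, huv⟩)
    obtain ⟨j, hj⟩ := σ.surjective ⟨w, hw⟩
    have hjw : (F j).getLast (hne j) = w := by rw [hlast, hj]
    have hv := hR.mem_of_reflTransGen_getLast (hne j) (hchain j) (hhead j) (hjw ▸ hvw)
    exact ⟨j, hR.exists_getElem?_of_mem (hne j) (hchain j) (hhead j) huv hv⟩

end Decomposition

/-! ### Planar networks -/

section Union

variable {V : Type*} [DecidableEq V] {P Q : Finset (V × V)}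

theorem dom_union : dom (P ∪ Q) = dom P ∪ dom Q := Finset.image_union _ _

theorem ran_union : ran (P ∪ Q) = ran P ∪ ran Q := Finset.image_union _ _

theorem ends_union (h : Disjoint (dom P) (ran Q)) :
    ends (P ∪ Q) = (ends P \ dom Q) ∪ ends Q := by
  ext v
  have := @Finset.disjoint_left.1 h v
  simp only [ends, dom_union, ran_union, Finset.mem_sdiff, Finset.mem_union]
  tauto

theorem starts_union (h : Disjoint (dom P) (ran Q)) :
    starts (P ∪ Q) = starts P ∪ (starts Q \ ran P) := by
  ext v
  have := @Finset.disjoint_left.1 h v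
  simp only [starts, dom_union, ran_union, Finset.mem_sdiff, Finset.mem_union]
  tauto

theorem injOn_union_of_disjoint_image {α β : Type*} [DecidableEq α] [DecidableEq β] {f : α → β}
    {s t : Finset α} (hs : Set.InjOn f s) (ht : Set.InjOn f t)
    (h : Disjoint (s.image f) (t.image f)) : Set.InjOn f (s ∪ t : Finset α) := by
  rw [Finset.coe_union, Set.injOn_union (Finset.disjoint_coe.2 h.of_image_finset)]
  exact ⟨hs, ht, fun x hx y hy => Finset.disjoint_iff_ne.1 h _ (Finset.mem_image_of_mem f hx) _
    (Finset.mem_image_of_mem f hy)⟩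

theorem IsPathSystem.union (hP : IsPathSystem P) (hQ : IsPathSystem Q)
    (hdom : Disjoint (dom P) (dom Q)) (hran : Disjoint (ran P) (ran Q)) : IsPathSystem (P ∪ Q) where
  fst_injOn := injOn_union_of_disjoint_image hP.fst_injOn hQ.fst_injOn hdom
  snd_injOn := injOn_union_of_disjoint_image hP.snd_injOn hQ.snd_injOn hran

end Union

section Networks

variable {N Γ Δ : PlanarNetwork} {P Q R : Finset ((ℝ × ℝ) × (ℝ × ℝ))} {v : ℝ × ℝ}

/-- The vertical line through the sources of `N`. -/
def sourceLine (N : PlanarNetwork) : Set (ℝ × ℝ) := {v | v.1 = N.a}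

/-- The vertical line through the sinks of `N`. -/
def sinkLine (N : PlanarNetwork) : Set (ℝ × ℝ) := {v | v.1 = N.b}

/-- `R` is the edge set of a multipath of `N`: a union of vertex-disjoint paths of `N` from sources
to sinks. -/
def IsMultipath (N : PlanarNetwork) (R : Finset ((ℝ × ℝ) × (ℝ × ℝ))) : Prop :=
  IsLinking N.E (sourceLine N) (sinkLine N) R

theorem bounds_of_mem_dom (hR : R ⊆ N.E) (hv : v ∈ dom R) : N.a ≤ v.1 ∧ v.1 < N.b := by
  obtain ⟨w, hvw⟩ := mem_dom.1 hv
  obtain ⟨hv, hw, hlt⟩ := N.ends _ (hR hvw)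
  exact ⟨(N.strip v hv).1, hlt.trans_le (N.strip w hw).2⟩

theorem bounds_of_mem_ran (hR : R ⊆ N.E) (hv : v ∈ ran R) : N.a < v.1 ∧ v.1 ≤ N.b := by
  obtain ⟨u, huv⟩ := mem_ran.1 hv
  obtain ⟨hu, hv, hlt⟩ := N.ends _ (hR huv)
  exact ⟨(N.strip u hu).1.trans_lt hlt, (N.strip v hv).2⟩

section Paths

variable {k : ℕ} {F : Fin k → List (ℝ × ℝ)}

theorem isDisjointFamily_of_isThroughPath (hF : ∀ j, IsThroughPath N (F j))
    (hdisj : PairwiseVertexDisjoint F) : IsDisjointFamily F := by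
  refine ⟨fun j => ?_, hdisj, fun j => ?_⟩
  · obtain ⟨p, q, ⟨-, hchain, -⟩, -⟩ := hF j
    exact nodup_of_isChain (fun e he => (N.ends e he).2.2) hchain
  · obtain ⟨p, q, ⟨-, -, hp, hq⟩, hpa, hqb⟩ := hF j
    by_contra hlen
    rw [List.head?_eq_getElem?] at hp
    rw [List.getLast?_eq_getElem?, show (F j).length - 1 = 0 by omega, hp] at hq
    rw [Option.some.inj hq, hqb] at hpa
    exact N.hab.ne' hpa

theorem isMultipath_edgeSet (hF : ∀ j, IsThroughPath N (F j))
    (hdisj : PairwiseVertexDisjoint F) : IsMultipath N (edgeSet F) := by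
  have hfam := isDisjointFamily_of_isThroughPath hF hdisj
  refine ⟨?_, hfam.isPathSystem, fun v hv => ?_, fun v hv => ?_⟩
  · rintro ⟨u, v⟩ huv
    obtain ⟨j, i, hu, hv⟩ := mem_edgeSet.1 huv
    obtain ⟨hi, rfl⟩ := List.getElem?_eq_some_iff.1 hv
    obtain ⟨_, rfl⟩ := List.getElem?_eq_some_iff.1 hu
    obtain ⟨p, q, ⟨-, hchain, -⟩, -⟩ := hF j
    exact List.isChain_iff_getElem.1 hchain i hi
  · obtain ⟨j, hj⟩ := hfam.mem_starts.1 hv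
    obtain ⟨p, q, ⟨-, -, hp, -⟩, hpa, -⟩ := hF j
    exact Option.some.inj (hj.symm.trans hp) ▸ hpa
  · obtain ⟨j, hj⟩ := hfam.mem_ends.1 hv
    obtain ⟨p, q, ⟨-, -, -, hq⟩, -, hqb⟩ := hF j
    exact Option.some.inj (hj.symm.trans hq) ▸ hqb

theorem IsMultipath.exists_isThroughPath (hR : IsMultipath N R) (hk : (ends R).card = k) :
    ∃ F : Fin k → List (ℝ × ℝ), (∀ j, IsThroughPath N (F j)) ∧ PairwiseVertexDisjoint F ∧
      edgeSet F = R := by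
  obtain ⟨F, hF, rfl⟩ := hR.isPathSystem.exists_isDisjointFamily (ι := Fin k)
    (fun e he => (N.ends e (hR.subset he)).2.2) (by rw [Fintype.card_fin, hk])
  refine ⟨F, fun j => ?_, hF.disjoint, rfl⟩
  have hne := List.ne_nil_of_length_pos (Nat.zero_lt_of_lt (hF.one_lt_length j))
  have hhead := List.head?_eq_some_head hne
  have hlast := List.getLast?_eq_some_getLast hne
  refine ⟨_, _, ⟨hne, List.isChain_iff_getElem.2 fun i hi => hR.subset (mem_edgeSet.2 ?_), hhead,
    hlast⟩, hR.starts_subset _ (hF.mem_starts.2 ⟨j, hhead⟩),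
    hR.ends_subset _ (hF.mem_ends.2 ⟨j, hlast⟩)⟩
  exact ⟨j, i, List.getElem?_eq_getElem _, List.getElem?_eq_getElem hi⟩

end Paths

variable {ε : (ℝ × ℝ) × (ℝ × ℝ) → ℝ} {i k p : ℕ} {x : ℝ}

theorem mem_gdWeights_iff : x ∈ gdWeights Γ Δ ε i k ↔
    ∃ P Q, IsMultipath Γ P ∧ IsMultipath Δ Q ∧ starts Q ⊆ ends P ∧ (ends P).card = k ∧
      (ends Q).card = i ∧ x = ∑ e ∈ P, ε e + ∑ e ∈ Q, ε e := by
  constructor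
  · rintro ⟨G, D, hG, hD, hGdisj, hDdisj, hGD, rfl⟩
    have hG' := isDisjointFamily_of_isThroughPath hG hGdisj
    have hD' := isDisjointFamily_of_isThroughPath hD hDdisj
    refine ⟨edgeSet G, edgeSet D, isMultipath_edgeSet hG hGdisj, isMultipath_edgeSet hD hDdisj,
      fun v hv => ?_, by simp [hG'.card_ends], by simp [hD'.card_ends], ?_⟩
    · obtain ⟨j, hj⟩ := hD'.mem_starts.1 hv
      obtain ⟨m, hm⟩ := hGD j
      exact hG'.mem_ends.2 ⟨m, hm ▸ hj⟩
    · rw [hG'.sum_edgeSet, hD'.sum_edgeSet]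
      rfl
  · rintro ⟨P, Q, hP, hQ, hQP, hk, hi, rfl⟩
    obtain ⟨G, hG, hGdisj, rfl⟩ := hP.exists_isThroughPath hk
    obtain ⟨D, hD, hDdisj, rfl⟩ := hQ.exists_isThroughPath hi
    have hG' := isDisjointFamily_of_isThroughPath hG hGdisj
    have hD' := isDisjointFamily_of_isThroughPath hD hDdisj
    refine ⟨G, D, hG, hD, hGdisj, hDdisj, fun j => ?_, ?_⟩
    · obtain ⟨p, q, ⟨-, -, hp, -⟩, -⟩ := hD j
      obtain ⟨m, hm⟩ := hG'.mem_ends.1 (hQP (hD'.mem_starts.2 ⟨j, hp⟩))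
      exact ⟨m, hp.trans hm.symm⟩
    · rw [hG'.sum_edgeSet, hD'.sum_edgeSet]
      rfl

section Concatenation

variable (hc : Δ.a = Γ.b)

include hc

theorem disjoint_dom_dom (hP : P ⊆ Γ.E) (hQ : Q ⊆ Δ.E) : Disjoint (dom P) (dom Q) := by
  refine Finset.disjoint_left.2 fun v hvP hvQ => ?_
  linarith [bounds_of_mem_dom hP hvP, bounds_of_mem_dom hQ hvQ]

theorem disjoint_ran_ran (hP : P ⊆ Γ.E) (hQ : Q ⊆ Δ.E) : Disjoint (ran P) (ran Q) := by
  refine Finset.disjoint_left.2 fun v hvP hvQ => ?_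
  linarith [bounds_of_mem_ran hP hvP, bounds_of_mem_ran hQ hvQ]

theorem disjoint_dom_ran (hP : P ⊆ Γ.E) (hQ : Q ⊆ Δ.E) : Disjoint (dom P) (ran Q) := by
  refine Finset.disjoint_left.2 fun v hvP hvQ => ?_
  linarith [bounds_of_mem_dom hP hvP, bounds_of_mem_ran hQ hvQ]

theorem disjoint_sinkLine_sinkLine : Disjoint (sinkLine Γ) (sinkLine Δ) :=
  Set.disjoint_left.2 fun _ h h' => (hc ▸ Δ.hab).ne (h.symm.trans h')

theorem disjoint_sourceLine_sinkLine_union : Disjoint (sourceLine Γ) (sinkLine Γ ∪ sinkLine Δ) := by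
  refine Set.disjoint_union_right.2 ⟨Set.disjoint_left.2 fun v h h' => ?_,
    Set.disjoint_left.2 fun v h h' => ?_⟩
  · exact Γ.hab.ne (h.symm.trans h')
  · exact (Γ.hab.trans (hc ▸ Δ.hab)).ne (h.symm.trans h')

theorem IsMultipath.ends_union (hP : IsMultipath Γ P) (hQ : IsMultipath Δ Q) :
    ends (P ∪ Q) = (ends P \ starts Q) ∪ ends Q := by
  rw [PathSystem.ends_union (disjoint_dom_ran hc hP.subset hQ.subset)]
  congr 1
  ext v
  have := @Finset.disjoint_left.1 (disjoint_ran_ran hc hP.subset hQ.subset) v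
  simp only [ends, starts, Finset.mem_sdiff]
  tauto

theorem IsMultipath.union (hP : IsMultipath Γ P) (hQ : IsMultipath Δ Q)
    (hQP : starts Q ⊆ ends P) :
    IsLinking (Γ.E ∪ Δ.E) (sourceLine Γ) (sinkLine Γ ∪ sinkLine Δ) (P ∪ Q) where
  subset := Finset.union_subset_union hP.subset hQ.subset
  isPathSystem := hP.isPathSystem.union hQ.isPathSystem (disjoint_dom_dom hc hP.subset hQ.subset)
    (disjoint_ran_ran hc hP.subset hQ.subset)
  starts_subset v hv := by
    rw [starts_union (disjoint_dom_ran hc hP.subset hQ.subset), Finset.mem_union,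
      Finset.mem_sdiff] at hv
    exact hP.starts_subset v
      (hv.resolve_right fun h => h.2 (Finset.mem_sdiff.1 (hQP h.1)).1)
  ends_subset v hv := by
    rw [hP.ends_union hc hQ, Finset.mem_union] at hv
    exact hv.imp (fun h => hP.ends_subset v (Finset.mem_sdiff.1 h).1) (hQ.ends_subset v)

theorem endCount_union_sinkLine_left (hP : IsMultipath Γ P) (hQ : IsMultipath Δ Q)
    (hQP : starts Q ⊆ ends P) :
    endCount (P ∪ Q) (sinkLine Γ) + (ends Q).card = (ends P).card := by
  classical
  have hP_sink : ∀ v ∈ ends P \ starts Q, v ∈ sinkLine Γ := fun v hv =>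
    hP.ends_subset v (Finset.mem_sdiff.1 hv).1
  have hQ_sink : ∀ v ∈ ends Q, v ∉ sinkLine Γ := fun v hv h =>
    Set.disjoint_left.1 (disjoint_sinkLine_sinkLine hc) h (hQ.ends_subset v hv)
  rw [endCount, hP.ends_union hc hQ, Finset.filter_union,
    Finset.filter_true_of_mem hP_sink, Finset.filter_false_of_mem hQ_sink, Finset.union_empty,
    ← hQ.isPathSystem.card_starts, Finset.card_sdiff_add_card_eq_card hQP]

theorem endCount_union_sinkLine_right (hP : IsMultipath Γ P) (hQ : IsMultipath Δ Q) :
    endCount (P ∪ Q) (sinkLine Δ) = (ends Q).card := by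
  classical
  have hP_sink : ∀ v ∈ ends P \ starts Q, v ∉ sinkLine Δ := fun v hv =>
    Set.disjoint_left.1 (disjoint_sinkLine_sinkLine hc)
      (hP.ends_subset v (Finset.mem_sdiff.1 hv).1)
  rw [endCount, hP.ends_union hc hQ, Finset.filter_union,
    Finset.filter_false_of_mem hP_sink, Finset.filter_true_of_mem hQ.ends_subset,
    Finset.empty_union]

theorem exists_isMultipath_union_eq
    (hR : IsLinking (Γ.E ∪ Δ.E) (sourceLine Γ) (sinkLine Γ ∪ sinkLine Δ) R) :
    ∃ P Q, IsMultipath Γ P ∧ IsMultipath Δ Q ∧ starts Q ⊆ ends P ∧ P ∪ Q = R := by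
  have hP : R ∩ Γ.E ⊆ Γ.E := Finset.inter_subset_right
  have hQ : R ∩ Δ.E ⊆ Δ.E := Finset.inter_subset_right
  have hPQ : R ∩ Γ.E ∪ R ∩ Δ.E = R := by
    rw [← Finset.inter_union_distrib_left, Finset.inter_eq_left.2 hR.subset]
  generalize R ∩ Γ.E = P, R ∩ Δ.E = Q at hP hQ hPQ
  subst hPQ
  have hPsys := hR.isPathSystem.subset (Finset.subset_union_left : P ⊆ P ∪ Q)
  have hQsys := hR.isPathSystem.subset (Finset.subset_union_right : Q ⊆ P ∪ Q)
  have hstarts := hR.starts_subset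
  have hends := hR.ends_subset
  rw [starts_union (disjoint_dom_ran hc hP hQ)] at hstarts
  rw [ends_union (disjoint_dom_ran hc hP hQ)] at hends
  have hP_ends : ∀ v ∈ ends P, v ∈ sinkLine Γ := fun v hv => by
    have hvP := bounds_of_mem_ran hP (Finset.mem_sdiff.1 hv).1
    by_cases hvQ : v ∈ dom Q
    · exact le_antisymm hvP.2 (hc ▸ (bounds_of_mem_dom hQ hvQ).1)
    · refine (hends v (Finset.mem_union_left _ (Finset.mem_sdiff.2 ⟨hv, hvQ⟩))).resolve_right ?_
      exact fun h => (hvP.2.trans_lt (hc ▸ Δ.hab)).ne h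
  have hQ_starts : ∀ v ∈ starts Q, v ∈ ran P := fun v hv => by
    by_contra hvP
    have hva : v.1 = Γ.a := hstarts v (Finset.mem_union_right _ (Finset.mem_sdiff.2 ⟨hv, hvP⟩))
    linarith [Γ.hab, bounds_of_mem_dom hQ (Finset.mem_sdiff.1 hv).1]
  have hQP : starts Q ⊆ ends P := fun v hv => Finset.mem_sdiff.2 ⟨hQ_starts v hv, fun h =>
    Finset.disjoint_left.1 (disjoint_dom_dom hc hP hQ) h (Finset.mem_sdiff.1 hv).1⟩
  refine ⟨P, Q, ⟨hP, hPsys, fun v hv => hstarts v (Finset.mem_union_left _ hv), hP_ends⟩,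
    ⟨hQ, hQsys, fun v hv => (hP_ends v (hQP hv)).trans hc.symm, fun v hv => ?_⟩, hQP, rfl⟩
  refine (hends v (Finset.mem_union_right _ hv)).resolve_left fun h => ?_
  exact (bounds_of_mem_ran hQ (Finset.mem_sdiff.1 hv).1).1.ne' (h.trans hc.symm)

theorem gdWeights_eq_linkingWeights :
    gdWeights Γ Δ ε i (p + i) =
      linkingWeights (Γ.E ∪ Δ.E) (sourceLine Γ) (sinkLine Γ) (sinkLine Δ) ε p i := by
  ext x
  rw [mem_gdWeights_iff]
  constructor
  · rintro ⟨P, Q, hP, hQ, hQP, hk, rfl, rfl⟩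
    refine ⟨P ∪ Q, hP.union hc hQ hQP, ?_, endCount_union_sinkLine_right hc hP hQ,
      (Finset.sum_union (disjoint_dom_dom hc hP.subset hQ.subset).of_image_finset).symm⟩
    exact Nat.add_right_cancel ((endCount_union_sinkLine_left hc hP hQ hQP).trans hk)
  · rintro ⟨R, hR, rfl, rfl, rfl⟩
    obtain ⟨P, Q, hP, hQ, hQP, rfl⟩ := exists_isMultipath_union_eq hc hR
    have hQi := endCount_union_sinkLine_right hc hP hQ
    refine ⟨P, Q, hP, hQ, hQP, ?_, hQi.symm,
      Finset.sum_union (disjoint_dom_dom hc hP.subset hQ.subset).of_image_finset⟩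
    rw [hQi, endCount_union_sinkLine_left hc hP hQ hQP]

end Concatenation

end Networks

end PathSystem

open PathSystem in
theorem concatenated_networks_hive_general (Γ Δ : PlanarNetwork) (hc : Δ.a = Γ.b)
    (ε : (ℝ × ℝ) × (ℝ × ℝ) → ℝ) (n : ℕ) (t : ℕ → ℕ → ℝ)
    (ht : ∀ k, k ≤ n → ∀ i, i ≤ k → IsGreatest (gdWeights Γ Δ ε i k) (t i k)) :
    ∀ i k, 0 < i → i ≤ k → k < n →
      t i (k + 1) + t (i - 1) k ≥ t (i - 1) (k + 1) + t i k ∧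
      t i (k + 1) + t i k ≥ t (i + 1) (k + 1) + t (i - 1) k ∧
      t i k + t (i - 1) k ≥ t i (k + 1) + t (i - 1) (k - 1) := by
  intro i k hi hik hkn
  obtain ⟨j, rfl⟩ := Nat.exists_eq_add_one_of_ne_zero hi.ne'
  obtain ⟨p, rfl⟩ := Nat.exists_eq_add_of_le' hik
  have hA := disjoint_sourceLine_sinkLine_union hc
  have hBC := disjoint_sinkLine_sinkLine hc
  have hmax : ∀ {p i k} (_ : p + i = k := by omega) (_ : k ≤ n := by omega),
      IsGreatest (linkingWeights (Γ.E ∪ Δ.E) (sourceLine Γ) (sinkLine Γ) (sinkLine Δ) ε p i)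
        (t i k) := by
    rintro p i _ rfl hkn
    exact gdWeights_eq_linkingWeights hc ▸ ht _ hkn _ (Nat.le_add_left i p)
  exact ⟨
    add_le_add_of_isGreatest hmax hmax hmax hmax
      (linkingWeights_add_subset_of_left (p := p) (q := j) hA hBC),
    add_le_add_of_isGreatest hmax hmax hmax hmax
      (linkingWeights_add_subset_of_right (p := p) (q := j) hA hBC),
    add_le_add_of_isGreatest hmax hmax hmax hmax
      (linkingWeights_add_subset_of_both (p := p) (q := j) hA hBC)⟩

/-- Theorem `thm:Horn1`.  For composable rank-`n` planar
networks `Γ`, `Δ` and a real weighting `ε` of `Γ ∘ Δ`, the numbers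
`t i k = m_i^k(ε)` — whenever they all exist, i.e. are greatest elements of
the corresponding sets of `ΓΔ`-path weights — satisfy all three families of
hive (`C₃`) inequalities. -/
theorem concatenated_networks_hive (n : ℕ) (Γ Δ : PlanarNetwork)
    (hΓ : Γ.HasRank n) (hΔ : Δ.HasRank n) (hcomp : Composable Γ Δ)
    (ε : (ℝ × ℝ) × (ℝ × ℝ) → ℝ) (t : ℕ → ℕ → ℝ)
    (ht : ∀ k, k ≤ n → ∀ i, i ≤ k → IsGreatest (gdWeights Γ Δ ε i k) (t i k)) :
    ∀ i k, 0 < i → i ≤ k → k < n →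
      t i (k + 1) + t (i - 1) k ≥ t (i - 1) (k + 1) + t i k ∧
      t i (k + 1) + t i k ≥ t (i + 1) (k + 1) + t (i - 1) k ∧
      t i k + t (i - 1) k ≥ t i (k + 1) + t (i - 1) (k - 1) :=
  concatenated_networks_hive_general Γ Δ hcomp.1 ε n t ht
end
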